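/- arXiv:math/0306300 — 4 statements merged into one kernel-verified Lean document; each statement's English description precedes it below -/
import Mathlib

section
/- Let r ≥ 1 be an integer, λ_1,…,λ_r > 0 real numbers with Σ_{j=1}^r λ_j = 1/2, and μ_1,…,μ_r complex numbers with Re(μ_j) ≥ 0; set G(s) = Π_{j=1}^r Γ(λ_j s + μ_j). Then there exist real numbers A and B and a real number C > 0 such that for all t ≥ 1, conj(G(1/2 + it)) / G(1/2 + it) = e^{-it log(t/(2e)) + iπ/4 + iB} · t^{iA} · C^{-it} · (1 + O(1/t)), where the implied constant may depend on r, the λ_j and the μ_j. -/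
open Complex

/-!
Inverting Euler's limit formula for `Γ` turns Stirling's formula for factorials into
`Γ(z) = √(2π) exp ((z - 1/2) log z - z + μ(z))` on the upper half-plane. Binet's function `μ` is
given by Gudermann's series, whose terms are `O(|z + j|⁻²)`, so `μ(a + iv) = O(1/v)`. Since
`conj Γ / Γ = exp (-2i arg Γ)`, only imaginary parts matter. Expanding the elementary part at
`a + iv` leaves `v log v - v`, a constant and a multiple of `log v`, up to `O(1/v)`. Substituting
`v = λ_j t` and summing over `j`, the condition on `∑ λ_j` fixes the coefficient of `t log t`, and
everything else is absorbed into `A`, `B` and `C`. On bounded ranges of `t` both sides are bounded.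
-/

section Stirling

open Filter Asymptotics Topology Bornology

lemma log_mul_of_re_nonneg_of_re_pos {z w : ℂ} (hz₀ : z ≠ 0) (hz : 0 ≤ z.re) (hw : 0 < w.re) :
    log (z * w) = log z + log w := by
  have hargz := abs_le.mp (abs_arg_le_pi_div_two_iff.mpr hz)
  have hargw := abs_lt.mp (abs_arg_lt_pi_div_two_iff.mpr (Or.inl hw))
  have hw₀ : w ≠ 0 := by rintro rfl; simp at hw
  exact log_mul hz₀ hw₀ ⟨by linarith, by linarith⟩

lemma log_mul_of_im_pos_of_im_neg {z w : ℂ} (hz : 0 < z.im) (hw : w.im < 0) :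
    log (z * w) = log z + log w := by
  have hargz : 0 ≤ z.arg := arg_nonneg_iff.mpr hz.le
  have hargw : w.arg < 0 := arg_neg_iff.mpr hw
  have hz₀ : z ≠ 0 := by rintro rfl; simp at hz
  have hw₀ : w ≠ 0 := by rintro rfl; simp at hw
  exact log_mul hz₀ hw₀ ⟨by linarith [neg_pi_lt_arg w], by linarith [arg_le_pi z]⟩

/-- The elementary part `(z - 1/2) log z - z` of Stirling's formula for `log Γ(z)`, up to the
constant `log √(2π)`. -/
noncomputable def stirlingMain (z : ℂ) : ℂ := (z - 1 / 2) * log z - z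

/-- The general term of Gudermann's series for the remainder in Stirling's formula. -/
noncomputable def gudermannTerm (z : ℂ) : ℂ := (z + 1 / 2) * log (1 + z⁻¹) - 1

/-- Binet's function, the remainder `log Γ(z) - stirlingMain z - log √(2π)` in Stirling's formula,
encoded as the sum of Gudermann's series. -/
noncomputable def binetFunction (z : ℂ) : ℂ := ∑' j : ℕ, gudermannTerm (z + j)

lemma stirlingMain_add_one {z : ℂ} (hz : 0 < z.im) :
    stirlingMain (z + 1) = stirlingMain z + log z + gudermannTerm z := by
  have hz₀ : z ≠ 0 := by rintro rfl; simp at hz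
  have him : (1 + z⁻¹).im < 0 := by
    rw [add_im, one_im, zero_add, inv_im]
    exact div_neg_of_neg_of_pos (neg_neg_of_pos hz) (normSq_pos.mpr hz₀)
  have hlog : log (z + 1) = log z + log (1 + z⁻¹) := by
    rw [← log_mul_of_im_pos_of_im_neg hz him, mul_add, mul_one, mul_inv_cancel₀ hz₀]
  rw [stirlingMain, stirlingMain, gudermannTerm, hlog]
  ring

lemma prod_add_natCast_eq_exp {z : ℂ} (hz : 0 < z.im) (n : ℕ) :
    ∏ j ∈ Finset.range n, (z + j) =
      exp (stirlingMain (z + n) - stirlingMain z -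
        ∑ j ∈ Finset.range n, gudermannTerm (z + j)) := by
  induction n with
  | zero => simp
  | succ n ih =>
    have him : 0 < (z + n).im := by simpa using hz
    have hne : z + n ≠ 0 := fun h => by simp [h] at him
    rw [Finset.prod_range_succ, Finset.sum_range_succ, ih, Nat.cast_succ, ← add_assoc,
      stirlingMain_add_one him]
    nth_rw 2 [← exp_log hne]
    rw [← exp_add]
    ring_nf

lemma log_one_add_isBigO : (fun u : ℂ => log (1 + u)) =O[𝓝 0] fun u => u :=
  ((log_sub_self_isBigO.trans (isLittleO_pow_id one_lt_two).isBigO).add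
    (isBigO_refl _ _)).congr_left fun _ => sub_add_cancel _ _

lemma tendsto_const_mul_inv_cobounded (w : ℂ) :
    Tendsto (fun z : ℂ => w * z⁻¹) (cobounded ℂ) (𝓝 0) := by
  simpa using tendsto_inv₀_cobounded.const_mul w

lemma eventually_log_add_eq (w : ℂ) :
    ∀ᶠ z in cobounded ℂ ⊓ 𝓟 {z | 0 ≤ z.re}, log (w + z) = log z + log (1 + w * z⁻¹) := by
  have hre : ∀ᶠ z : ℂ in cobounded ℂ, 0 < (1 + w * z⁻¹).re :=
    ((continuous_re.tendsto _).comp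
      ((tendsto_const_mul_inv_cobounded w).const_add 1)).eventually_const_lt (by simp)
  filter_upwards [hre.filter_mono inf_le_left,
    (eventually_ne_cobounded 0).filter_mono inf_le_left,
    mem_inf_of_right (mem_principal_self _)] with z hpos hz₀ hz
  rw [← log_mul_of_re_nonneg_of_re_pos hz₀ hz hpos, mul_add, mul_one, mul_left_comm,
    mul_inv_cancel₀ hz₀, mul_one, add_comm]

lemma stirlingMain_add_sub_isBigO (w : ℂ) :
    (fun z : ℂ => stirlingMain (w + z) - ((w + z - 1 / 2) * log z - z))
      =O[cobounded ℂ ⊓ 𝓟 {z | 0 ≤ z.re}] fun z => z⁻¹ := by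
  have hu := tendsto_const_mul_inv_cobounded w
  have huO : (fun z : ℂ => w * z⁻¹) =O[cobounded ℂ] fun z => z⁻¹ :=
    (isBigO_refl _ _).const_mul_left w
  have hlin : (fun z : ℂ => log (1 + w * z⁻¹)) =O[cobounded ℂ] fun z => z⁻¹ :=
    (log_one_add_isBigO.comp_tendsto hu).trans huO
  have hquad : (fun z : ℂ => log (1 + w * z⁻¹) - w * z⁻¹) =O[cobounded ℂ] fun z => z⁻¹ ^ 2 :=
    (log_sub_self_isBigO.comp_tendsto hu).trans (huO.pow 2)
  have hrest : (fun z : ℂ => (w - 1 / 2) * log (1 + w * z⁻¹)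
      + z * (log (1 + w * z⁻¹) - w * z⁻¹)) =O[cobounded ℂ] fun z => z⁻¹ := by
    refine (hlin.const_mul_left _).add (((isBigO_refl (fun z : ℂ => z) _).mul hquad).congr' .rfl ?_)
    filter_upwards [eventually_ne_cobounded 0] with z hz
    field_simp
  refine (hrest.mono inf_le_left).congr' ?_ .rfl
  filter_upwards [eventually_log_add_eq w,
    (eventually_ne_cobounded 0).filter_mono inf_le_left] with z hlog hz₀
  rw [stirlingMain, hlog]
  field_simp
  ring

lemma logTaylor_three (z : ℂ) : logTaylor 3 z = z - z ^ 2 / 2 := by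
  simp only [logTaylor_succ, logTaylor_zero, Pi.add_apply]
  push_cast
  ring

lemma gudermannTerm_isBigO : gudermannTerm =O[cobounded ℂ] fun z => z⁻¹ ^ 2 := by
  have hcubic : (fun z : ℂ => log (1 + z⁻¹) - (z⁻¹ - z⁻¹ ^ 2 / 2)) =O[cobounded ℂ]
      fun z => z⁻¹ ^ 3 := by
    refine ((log_sub_logTaylor_isBigO 2).comp_tendsto tendsto_inv₀_cobounded).congr_left fun z => ?_
    rw [Function.comp_apply, logTaylor_three]
  have hfactor : (fun z : ℂ => z + 1 / 2) =O[cobounded ℂ] fun z => z :=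
    (isBigO_refl _ _).add (isLittleO_const_id_cobounded _).isBigO
  have hrest : (fun z : ℂ => (-1 / 4) * z⁻¹ ^ 2
      + (z + 1 / 2) * (log (1 + z⁻¹) - (z⁻¹ - z⁻¹ ^ 2 / 2))) =O[cobounded ℂ] fun z => z⁻¹ ^ 2 := by
    refine ((isBigO_refl _ _).const_mul_left _).add ((hfactor.mul hcubic).congr' .rfl ?_)
    filter_upwards [eventually_ne_cobounded 0] with z hz
    field_simp
  refine hrest.congr' ?_ .rfl
  filter_upwards [eventually_ne_cobounded 0] with z hz
  rw [gudermannTerm]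
  field_simp
  ring

lemma summable_gudermannTerm_add_natCast (z : ℂ) :
    Summable fun j : ℕ => gudermannTerm (z + j) := by
  have htop : Tendsto (fun j : ℕ => z + (j : ℂ)) atTop (cobounded ℂ) :=
    (tendsto_const_add_cobounded z).comp tendsto_natCast_atTop_cobounded
  have hequiv : (fun j : ℕ => z + (j : ℂ)) ~[atTop] fun j => (j : ℂ) :=
    ((isLittleO_const_id_cobounded z).comp_tendsto
      tendsto_natCast_atTop_cobounded).add_isEquivalent .refl
  have hinv : (fun j : ℕ => (z + j)⁻¹ ^ 2) =O[atTop] fun j : ℕ => ((j : ℝ) ^ 2)⁻¹ :=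
    (hequiv.inv.pow 2).isBigO.trans (isBigO_of_le _ fun j => by simp)
  exact summable_of_isBigO_nat (Real.summable_nat_pow_inv.mpr one_lt_two)
    ((gudermannTerm_isBigO.comp_tendsto htop).trans hinv)

lemma hasSum_inv_sub_inv_add_one {x : ℝ} (hx : 0 < x) :
    HasSum (fun j : ℕ => (x + j)⁻¹ - (x + j + 1)⁻¹) x⁻¹ := by
  have hnonneg (j : ℕ) : 0 ≤ (x + j)⁻¹ - (x + j + 1)⁻¹ :=
    sub_nonneg.mpr (inv_anti₀ (by positivity) (by linarith))
  have hpartial (n : ℕ) :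
      ∑ j ∈ Finset.range n, ((x + j)⁻¹ - (x + j + 1)⁻¹) = x⁻¹ - (x + n)⁻¹ := by
    simpa [add_assoc] using Finset.sum_range_sub' (fun j : ℕ => (x + j)⁻¹) n
  have hlim : Tendsto (fun n : ℕ => (x + n)⁻¹) atTop (𝓝 0) :=
    tendsto_inv_atTop_zero.comp (tendsto_atTop_add_const_left _ x tendsto_natCast_atTop_atTop)
  rw [hasSum_iff_tendsto_nat_of_nonneg hnonneg]
  simpa only [hpartial, sub_zero] using hlim.const_sub x⁻¹

lemma inv_sq_le_two_mul_inv_sub_inv_add_one {x : ℝ} (hx : 1 ≤ x) :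
    x⁻¹ ^ 2 ≤ 2 * (x⁻¹ - (x + 1)⁻¹) := by
  have hx₀ : 0 < x := by linarith
  rw [inv_sub_inv hx₀.ne' (by positivity), inv_pow, inv_eq_one_div, ← mul_div_assoc,
    div_le_div_iff₀ (by positivity) (by positivity)]
  nlinarith

lemma add_natCast_div_four_le_norm {a : ℂ} {v : ℝ} (hv : 4 * ‖a‖ ≤ v) (j : ℕ) :
    (v + j) / 4 ≤ ‖a + I * v + j‖ := by
  have hre : a.re + j ≤ ‖a + I * v + j‖ := by simpa using re_le_norm (a + I * v + j)
  have him : a.im + v ≤ ‖a + I * v + j‖ := by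
    simpa using (le_abs_self _).trans (abs_im_le_norm (a + I * v + j))
  have hare := neg_le_of_abs_le (abs_re_le_norm a)
  have haim := neg_le_of_abs_le (abs_im_le_norm a)
  linarith [j.cast_nonneg (α := ℝ)]

lemma binetFunction_add_I_mul_isBigO (a : ℂ) :
    (fun v : ℝ => binetFunction (a + I * v)) =O[atTop] fun v => v⁻¹ := by
  obtain ⟨C, hC₀, hC⟩ := gudermannTerm_isBigO.exists_pos
  obtain ⟨R, -, hR⟩ := hasBasis_cobounded_norm.eventually_iff.mp hC.bound
  refine .of_bound (32 * C) ?_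
  filter_upwards [eventually_ge_atTop (1 : ℝ), eventually_ge_atTop (4 * ‖a‖),
    eventually_ge_atTop (4 * R)] with v hv₁ hva hvR
  have hv₀ : 0 < v := by linarith
  have hterm (j : ℕ) : ‖gudermannTerm (a + I * v + j)‖ ≤
      32 * C * ((v + j)⁻¹ - (v + j + 1)⁻¹) := by
    have hj : (0 : ℝ) ≤ j := j.cast_nonneg
    have hnorm := add_natCast_div_four_le_norm hva j
    calc ‖gudermannTerm (a + I * v + j)‖
        ≤ C * ‖(a + I * v + j)⁻¹ ^ 2‖ := hR (by simp only [Set.mem_ofPred_eq]; linarith [hj])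
      _ = C * ‖a + I * v + j‖⁻¹ ^ 2 := by rw [norm_pow, norm_inv]
      _ ≤ C * ((v + j) / 4)⁻¹ ^ 2 := by gcongr
      _ = 16 * C * (v + j)⁻¹ ^ 2 := by rw [inv_div]; ring
      _ ≤ 16 * C * (2 * ((v + j)⁻¹ - (v + j + 1)⁻¹)) := by
        gcongr
        exact inv_sq_le_two_mul_inv_sub_inv_add_one (by linarith [hj])
      _ = 32 * C * ((v + j)⁻¹ - (v + j + 1)⁻¹) := by ring
  rw [Real.norm_of_nonneg (inv_nonneg.mpr hv₀.le)]
  exact tsum_of_norm_bounded ((hasSum_inv_sub_inv_add_one hv₀).mul_left _) hterm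

lemma natCast_factorial_eq_stirlingSeq_mul_exp {n : ℕ} (hn : n ≠ 0) :
    (n.factorial : ℂ) = ((Stirling.stirlingSeq n * √2 : ℝ) : ℂ) *
      exp ((n + 1 / 2) * log n - n) := by
  have hn₀ : (0 : ℝ) < n := by positivity
  have hsqrt : √n = Real.exp (1 / 2 * Real.log n) := by
    rw [Real.sqrt_eq_rpow, Real.rpow_def_of_pos hn₀, mul_comm]
  have hpow : (n / Real.exp 1) ^ n = Real.exp (n * (Real.log n - 1)) := by
    rw [Real.exp_nat_mul, Real.exp_sub, Real.exp_log hn₀]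
  have hexp : Real.exp ((n + 1 / 2) * Real.log n - n) = √n * (n / Real.exp 1) ^ n := by
    rw [hsqrt, hpow, ← Real.exp_add]
    ring_nf
  have hreal : (n.factorial : ℝ) =
      Stirling.stirlingSeq n * √2 * Real.exp ((n + 1 / 2) * Real.log n - n) := by
    rw [hexp, Stirling.stirlingSeq, Real.sqrt_mul zero_le_two]
    field_simp
  simpa using congrArg ofReal hreal

theorem Gamma_eq_sqrt_two_pi_mul_exp {z : ℂ} (hz : 0 < z.im) :
    Gamma z = (√(2 * Real.pi) : ℝ) * exp (stirlingMain z + binetFunction z) := by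
  have hconst : Tendsto (fun n => ((Stirling.stirlingSeq n * √2 : ℝ) : ℂ)) atTop
      (𝓝 (√(2 * Real.pi) : ℝ)) := by
    rw [mul_comm 2, Real.sqrt_mul Real.pi_pos.le]
    exact (continuous_ofReal.tendsto _).comp (Stirling.tendsto_stirlingSeq_sqrt_pi.mul_const _)
  have hseries : Tendsto (fun n : ℕ => ∑ j ∈ Finset.range (n + 1), gudermannTerm (z + j)) atTop
      (𝓝 (binetFunction z)) :=
    (summable_gudermannTerm_add_natCast z).hasSum.tendsto_sum_nat.comp (tendsto_add_atTop_nat 1)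
  have hshift : Tendsto (fun n : ℕ => stirlingMain (z + 1 + n) -
      ((z + 1 + n - 1 / 2) * log n - n)) atTop (𝓝 0) := by
    have hnat : Tendsto (fun n : ℕ => (n : ℂ)) atTop (cobounded ℂ ⊓ 𝓟 {z | 0 ≤ z.re}) :=
      tendsto_inf.mpr ⟨tendsto_natCast_atTop_cobounded, tendsto_principal.mpr (by simp)⟩
    exact ((stirlingMain_add_sub_isBigO (z + 1)).comp_tendsto hnat).trans_tendsto
      (tendsto_inv₀_cobounded.comp tendsto_natCast_atTop_cobounded)
  have hlim := hconst.mul ((continuous_exp.tendsto _).comp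
    ((hseries.const_add (stirlingMain z)).sub hshift))
  rw [sub_zero] at hlim
  refine tendsto_nhds_unique (GammaSeq_tendsto_Gamma z) (hlim.congr' ?_)
  filter_upwards [eventually_ne_atTop 0] with n hn
  rw [GammaSeq, prod_add_natCast_eq_exp hz, natCast_factorial_eq_stirlingSeq_mul_exp hn,
    cpow_def_of_ne_zero (Nat.cast_ne_zero.mpr hn), mul_left_comm, ← exp_add, mul_div_assoc,
    ← exp_sub]
  simp only [Function.comp_apply, Nat.cast_succ]
  ring_nf

end Stirling

section Phase

open Filter Asymptotics Topology Bornology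

lemma conj_exp_div_exp (w : ℂ) :
    (starRingEnd ℂ) (exp w) / exp w = exp ((-2 * w.im : ℝ) * I) := by
  rw [← exp_conj, ← exp_sub, ← neg_sub w, sub_conj]
  push_cast
  ring_nf

lemma norm_conj_div_self_le_one (z : ℂ) : ‖(starRingEnd ℂ) z / z‖ ≤ 1 := by
  rw [norm_div, norm_conj]
  exact div_self_le_one _

lemma norm_exp_ofReal_mul_I_sub_exp_le (x y : ℝ) : ‖exp (x * I) - exp (y * I)‖ ≤ |x - y| := by
  have hfactor : exp (x * I) - exp (y * I) = exp (y * I) * (exp (I * (x - y : ℝ)) - 1) := by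
    rw [mul_sub, ← exp_add, mul_one]
    push_cast
    ring_nf
  rw [hfactor, norm_mul, norm_exp_ofReal_mul_I, one_mul]
  exact Real.norm_exp_I_mul_ofReal_sub_one_le

lemma norm_prod_sub_prod_le_sum {ι R : Type*} [NormedCommRing R] [NormOneClass R]
    (s : Finset ι) {f g : ι → R} (hf : ∀ i ∈ s, ‖f i‖ ≤ 1) (hg : ∀ i ∈ s, ‖g i‖ ≤ 1) :
    ‖∏ i ∈ s, f i - ∏ i ∈ s, g i‖ ≤ ∑ i ∈ s, ‖f i - g i‖ := by
  induction s using Finset.cons_induction with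
  | empty => simp
  | cons i s his ih =>
    rw [Finset.forall_mem_cons] at hf hg
    have hprod : ‖∏ j ∈ s, g j‖ ≤ 1 :=
      (s.norm_prod_le g).trans (Finset.prod_le_one (fun _ _ => norm_nonneg _) hg.2)
    rw [Finset.prod_cons, Finset.prod_cons, Finset.sum_cons]
    calc ‖f i * ∏ j ∈ s, f j - g i * ∏ j ∈ s, g j‖
        = ‖(f i - g i) * ∏ j ∈ s, g j + f i * (∏ j ∈ s, f j - ∏ j ∈ s, g j)‖ := by ring_nf
      _ ≤ ‖f i - g i‖ * ‖∏ j ∈ s, g j‖ + ‖f i‖ * ‖∏ j ∈ s, f j - ∏ j ∈ s, g j‖ :=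
        norm_add_le_of_le (norm_mul_le _ _) (norm_mul_le _ _)
      _ ≤ ‖f i - g i‖ * 1 + 1 * ∑ j ∈ s, ‖f j - g j‖ := by
        gcongr
        exacts [hf.1, ih hf.2 hg.2]
      _ = ‖f i - g i‖ + ∑ j ∈ s, ‖f j - g j‖ := by rw [mul_one, one_mul]

/-- The elementary part of `arg Γ(a + iv)` as `v → ∞`, with the argument continued along the
vertical line rather than reduced modulo `2π`. -/
noncomputable def gammaPhase (a : ℂ) (v : ℝ) : ℝ :=
  v * Real.log v - v + (a.re - 1 / 2) * (Real.pi / 2) + a.im * Real.log v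

lemma im_stirlingMain_sub_gammaPhase_isBigO (a : ℂ) :
    (fun v : ℝ => (stirlingMain (a + I * v)).im - gammaPhase a v) =O[atTop] fun v => v⁻¹ := by
  have htop : Tendsto (fun v : ℝ => I * (v : ℂ)) atTop (cobounded ℂ ⊓ 𝓟 {z | 0 ≤ z.re}) := by
    refine tendsto_inf.mpr ⟨?_, tendsto_principal.mpr (by simp)⟩
    rw [← tendsto_norm_atTop_iff_cobounded]
    simpa using tendsto_abs_atTop_atTop
  have hmain := (stirlingMain_add_sub_isBigO a).comp_tendsto htop
  have him : (fun v : ℝ => (stirlingMain (a + I * v) -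
      ((a + I * v - 1 / 2) * log (I * v) - I * v)).im) =O[atTop] fun v => v⁻¹ :=
    (isBigO_of_le _ fun v => abs_im_le_norm _).trans (hmain.trans (isBigO_of_le _ fun v => by simp))
  refine him.congr' ?_ .rfl
  filter_upwards [eventually_gt_atTop 0] with v hv
  have hlog : log (I * v) = Real.log v + (Real.pi / 2 : ℝ) * I := by
    rw [mul_comm, log_ofReal_mul hv I_ne_zero, log_I]
    push_cast
    rfl
  have hhalf : (1 / 2 : ℂ) = (1 / 2 : ℝ) := by push_cast; rfl
  rw [hlog, hhalf, gammaPhase]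
  simp only [sub_im, mul_im, sub_re, add_re, mul_re, add_im, I_re, I_im, ofReal_re, ofReal_im]
  ring

lemma conj_Gamma_div_Gamma_sub_isBigO (a : ℂ) :
    (fun v : ℝ => (starRingEnd ℂ) (Gamma (a + I * v)) / Gamma (a + I * v) -
      exp ((-2 * gammaPhase a v : ℝ) * I)) =O[atTop] fun v => v⁻¹ := by
  have hbinet : (fun v : ℝ => (binetFunction (a + I * v)).im) =O[atTop] fun v => v⁻¹ :=
    (isBigO_of_le _ fun v => abs_im_le_norm _).trans (binetFunction_add_I_mul_isBigO a)
  have hphase := ((im_stirlingMain_sub_gammaPhase_isBigO a).add hbinet).const_mul_left (-2)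
  refine .trans (.of_bound 1 ?_) hphase
  filter_upwards [eventually_gt_atTop (-a.im)] with v hv
  have him : 0 < (a + I * v).im := by simpa using by linarith
  have hratio : (starRingEnd ℂ) (Gamma (a + I * v)) / Gamma (a + I * v) =
      exp ((-2 * (stirlingMain (a + I * v) + binetFunction (a + I * v)).im : ℝ) * I) := by
    have hconst : ((√(2 * Real.pi) : ℝ) : ℂ) ≠ 0 := ofReal_ne_zero.mpr (by positivity)
    rw [Gamma_eq_sqrt_two_pi_mul_exp him, map_mul, conj_ofReal, mul_div_mul_left _ _ hconst,
      conj_exp_div_exp]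
  rw [hratio, one_mul, Real.norm_eq_abs]
  refine (norm_exp_ofReal_mul_I_sub_exp_le _ _).trans_eq ?_
  rw [add_im]
  ring_nf

section Product

variable {ι : Type*} [Fintype ι] {lam : ι → ℝ}

lemma conj_prod_Gamma_div_prod_Gamma_sub_isBigO (hlam : ∀ j, 0 < lam j) (a : ι → ℂ) :
    (fun t : ℝ => (starRingEnd ℂ) (∏ j, Gamma (a j + I * (lam j * t : ℝ))) /
        ∏ j, Gamma (a j + I * (lam j * t : ℝ)) -
      exp ((∑ j, -2 * gammaPhase (a j) (lam j * t) : ℝ) * I)) =O[atTop] fun t => t⁻¹ := by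
  have hfactor (j : ι) : (fun t : ℝ =>
      (starRingEnd ℂ) (Gamma (a j + I * (lam j * t : ℝ))) / Gamma (a j + I * (lam j * t : ℝ)) -
        exp ((-2 * gammaPhase (a j) (lam j * t) : ℝ) * I)) =O[atTop] fun t => t⁻¹ := by
    have hcomp := (conj_Gamma_div_Gamma_sub_isBigO (a j)).comp_tendsto
      (tendsto_id.const_mul_atTop (hlam j))
    exact hcomp.trans (((isBigO_refl _ _).const_mul_left (lam j)⁻¹).congr_left
      fun t => (mul_inv _ _).symm)
  refine .trans (isBigO_of_le _ fun t => ?_) (IsBigO.fun_sum (s := Finset.univ)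
    fun j _ => (hfactor j).norm_left)
  rw [map_prod, ← Finset.prod_div_distrib, ofReal_sum, Finset.sum_mul, exp_sum]
  refine (norm_prod_sub_prod_le_sum _ (fun j _ => norm_conj_div_self_le_one _)
    fun j _ => (norm_exp_ofReal_mul_I _).le).trans (le_abs_self _)

lemma exists_sum_gammaPhase_eq (hlam : ∀ j, 0 < lam j) {d : ℝ} (hdeg : ∑ j, lam j = d / 2)
    (a : ι → ℂ) :
    ∃ A B c : ℝ, ∀ t : ℝ, 0 < t → ∑ j, -2 * gammaPhase (a j) (lam j * t) =
      -(d * t * Real.log (t / (2 * Real.exp 1))) + Real.pi / 4 + B + A * Real.log t - c * t := by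
  refine ⟨∑ j, -2 * (a j).im,
    ∑ j, -2 * (((a j).re - 1 / 2) * (Real.pi / 2) + (a j).im * Real.log (lam j)) - Real.pi / 4,
    ∑ j, 2 * (lam j * Real.log (2 * lam j)), fun t ht => ?_⟩
  have hlog : Real.log (t / (2 * Real.exp 1)) = Real.log t - Real.log 2 - 1 := by
    rw [Real.log_div ht.ne' (by positivity), Real.log_mul two_ne_zero (Real.exp_ne_zero 1),
      Real.log_exp, sub_sub]
  have hterm (j : ι) : -2 * gammaPhase (a j) (lam j * t) =
      lam j * (-2 * t * Real.log (t / (2 * Real.exp 1)))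
        + -2 * (((a j).re - 1 / 2) * (Real.pi / 2) + (a j).im * Real.log (lam j))
        + -2 * (a j).im * Real.log t - 2 * (lam j * Real.log (2 * lam j)) * t := by
    rw [gammaPhase, hlog, Real.log_mul (hlam j).ne' ht.ne', Real.log_mul two_ne_zero (hlam j).ne']
    ring
  simp_rw [hterm]
  rw [Finset.sum_sub_distrib, Finset.sum_add_distrib, Finset.sum_add_distrib, ← Finset.sum_mul,
    ← Finset.sum_mul, ← Finset.sum_mul, hdeg]
  ring

end Product

lemma exp_mul_cpow_mul_cpow_eq_exp {t : ℝ} (ht : 0 < t) (θ A c : ℝ) :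
    exp (I * θ) * (t : ℂ) ^ (I * A) * ((Real.exp c : ℝ) : ℂ) ^ (-(I * t)) =
      exp ((θ + A * Real.log t - c * t : ℝ) * I) := by
  rw [cpow_def_of_ne_zero (ofReal_ne_zero.mpr ht.ne'),
    cpow_def_of_ne_zero (ofReal_ne_zero.mpr (Real.exp_ne_zero c)), ← ofReal_log ht.le,
    ← ofReal_log (Real.exp_pos c).le, Real.log_exp, ← exp_add, ← exp_add]
  push_cast
  ring_nf

lemma exists_forall_norm_le_div_of_isBigO_inv {E : Type*} [SeminormedAddCommGroup E] {f : ℝ → E}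
    {M : ℝ} (hf : f =O[atTop] fun t : ℝ => t⁻¹) (hM : ∀ t, 1 ≤ t → ‖f t‖ ≤ M) :
    ∃ K : ℝ, ∀ t, 1 ≤ t → ‖f t‖ ≤ K / t := by
  obtain ⟨C, hC⟩ := hf.bound
  obtain ⟨T, hT⟩ := eventually_atTop.mp hC
  refine ⟨max C (M * T), fun t ht => ?_⟩
  have ht₀ : 0 < t := by linarith
  rw [le_div_iff₀ ht₀]
  rcases le_total T t with hTt | htT
  · refine le_max_of_le_left ?_
    simpa [abs_of_pos ht₀, ← div_eq_mul_inv, le_div_iff₀ ht₀] using hT t hTt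
  · refine le_max_of_le_right ?_
    have hM₀ : 0 ≤ M := (norm_nonneg _).trans (hM t ht)
    exact mul_le_mul (hM t ht) htT ht₀.le hM₀

end Phase

/-- A factor with `Re μ_j < 0` may have a pole on the critical line; `Gamma` takes the junk value
`0` there, and so does the quotient. This concerns only finitely many `t`. -/
theorem gamma_factor_ratio_asymptotic_general {ι : Type*} [Fintype ι]
    (lam : ι → ℝ) (hlam : ∀ j, 0 < lam j) (d : ℝ) (hdeg : ∑ j, lam j = d / 2) (mu : ι → ℂ)
    (G : ℂ → ℂ) (hG : ∀ s : ℂ, G s = ∏ j, Complex.Gamma ((lam j : ℂ) * s + mu j)) :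
    ∃ (A B C : ℝ), 0 < C ∧ ∃ K : ℝ, ∀ t : ℝ, 1 ≤ t →
      ‖(starRingEnd ℂ) (G (1 / 2 + Complex.I * t)) / G (1 / 2 + Complex.I * t) -
          Complex.exp (Complex.I *
              (-(d * t * Real.log (t / (2 * Real.exp 1))) + Real.pi / 4 + B)) *
            (t : ℂ) ^ (Complex.I * A) * (C : ℂ) ^ (-(Complex.I * t))‖ ≤ K / t := by
  set a : ι → ℂ := fun j => lam j / 2 + mu j with ha
  obtain ⟨A, B, c, hphase⟩ := exists_sum_gammaPhase_eq hlam hdeg a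
  have hGa (t : ℝ) : G (1 / 2 + I * t) = ∏ j, Gamma (a j + I * (lam j * t : ℝ)) := by
    rw [hG]
    refine Finset.prod_congr rfl fun j _ => ?_
    rw [ha]
    push_cast
    ring_nf
  obtain ⟨K, hK⟩ := exists_forall_norm_le_div_of_isBigO_inv
    (conj_prod_Gamma_div_prod_Gamma_sub_isBigO hlam a) fun t _ =>
      norm_sub_le_of_le (norm_conj_div_self_le_one _) (norm_exp_ofReal_mul_I _).le
  refine ⟨A, B, Real.exp c, Real.exp_pos c, K, fun t ht => ?_⟩
  have ht₀ : 0 < t := zero_lt_one.trans_le ht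
  have hmodel : exp (I * (-(d * t * Real.log (t / (2 * Real.exp 1))) + Real.pi / 4 + B)) *
      (t : ℂ) ^ (I * A) * ((Real.exp c : ℝ) : ℂ) ^ (-(I * t)) =
        exp ((∑ j, -2 * gammaPhase (a j) (lam j * t) : ℝ) * I) := by
    rw [hphase t ht₀, ← exp_mul_cpow_mul_cpow_eq_exp ht₀]
    push_cast
    rfl
  rw [hGa, hmodel]
  exact hK t ht

/-- Stirling asymptotics for the degree-one gamma factor on the critical
line: with `G(s) = ∏_j Γ(λ_j s + μ_j)` and `∑_j λ_j = 1/2`, there are reals `A`, `B` and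
`C > 0` with `conj (G(1/2 + it)) / G(1/2 + it)
  = e^{-it log(t/(2e)) + iπ/4 + iB} · t^{iA} · C^{-it} · (1 + O(1/t))` for `t ≥ 1`. -/
theorem gamma_factor_ratio_asymptotic (r : ℕ) (hr : 1 ≤ r)
    (lam : Fin r → ℝ) (hlam : ∀ j, 0 < lam j) (hdeg : ∑ j, lam j = 1 / 2)
    (mu : Fin r → ℂ) (hmu : ∀ j, 0 ≤ (mu j).re)
    (G : ℂ → ℂ) (hG : ∀ s : ℂ, G s = ∏ j, Complex.Gamma ((lam j : ℂ) * s + mu j)) :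
    ∃ (A B C : ℝ), 0 < C ∧ ∃ K : ℝ, ∀ t : ℝ, 1 ≤ t →
      ‖(starRingEnd ℂ) (G (1 / 2 + Complex.I * t)) / G (1 / 2 + Complex.I * t) -
          Complex.exp (Complex.I *
              (-(t * Real.log (t / (2 * Real.exp 1))) + Real.pi / 4 + B)) *
            (t : ℂ) ^ (Complex.I * A) * (C : ℂ) ^ (-(Complex.I * t))‖ ≤ K / t := by
  simpa using gamma_factor_ratio_asymptotic_general lam hlam 1 hdeg mu G hG
end

section
/- Let A be a real number, let x > 0 with x ≠ 1, let α > 0 and T ≥ 1. Then |∫_{αT}^{2αT} x^{it} t^{iA} dt| ≤ (2 + |A| log 2) / |log x|. -/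
open Complex

/-!
The phase `t ↦ x ^ (i t)` has the primitive `x ^ (i t) / (i log x)`, of constant modulus
`1 / |log x|`. Integrating by parts against the amplitude `t ^ (i A)`, which has modulus `1`, leaves
two boundary terms and the total variation `∫ |A| / t` of the amplitude.
-/

open MeasureTheory Set
open scoped Interval

section

variable {a b : ℝ}

theorem norm_integral_deriv_smul_le {𝕜 E : Type*} [NontriviallyNormedField 𝕜] [NormedAlgebra ℝ 𝕜]
    [NormedAddCommGroup E] [NormedSpace 𝕜 E] [NormedSpace ℝ E] [IsScalarTower ℝ 𝕜 E]
    [CompleteSpace E] {C : ℝ} {u u' : ℝ → 𝕜} {f f' : ℝ → E}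
    (hu : ∀ t ∈ [[a, b]], HasDerivAt u (u' t) t) (hf : ∀ t ∈ [[a, b]], HasDerivAt f (f' t) t)
    (hu' : IntervalIntegrable u' volume a b) (hf' : IntervalIntegrable f' volume a b)
    (hC : ∀ t ∈ [[a, b]], ‖u t‖ ≤ C) :
    ‖∫ t in a..b, u' t • f t‖ ≤ C * (‖f a‖ + ‖f b‖ + |∫ t in a..b, ‖f' t‖|) := by
  have by_parts : ∫ t in a..b, u' t • f t = u b • f b - u a • f a - ∫ t in a..b, u t • f' t := by
    rw [intervalIntegral.integral_smul_deriv_eq_deriv_smul hu hf hu' hf', sub_sub_cancel]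
  have norm_smul_le_mul {t : ℝ} (ht : t ∈ [[a, b]]) (y : E) : ‖u t • y‖ ≤ C * ‖y‖ :=
    (norm_smul_le _ _).trans (mul_le_mul_of_nonneg_right (hC t ht) (norm_nonneg y))
  have remainder : ‖∫ t in a..b, u t • f' t‖ ≤ C * |∫ t in a..b, ‖f' t‖| := by
    have hC₀ : 0 ≤ C := (norm_nonneg _).trans (hC a left_mem_uIcc)
    have pointwise : ∀ t ∈ Ι a b, ‖u t • f' t‖ ≤ C * ‖f' t‖ := fun t ht ↦
      norm_smul_le_mul (uIoc_subset_uIcc ht) (f' t)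
    calc ‖∫ t in a..b, u t • f' t‖
        ≤ |∫ t in a..b, C * ‖f' t‖| :=
          intervalIntegral.norm_integral_le_abs_of_norm_le
            (ae_restrict_of_forall_mem measurableSet_uIoc pointwise) (hf'.norm.const_mul C)
      _ = C * |∫ t in a..b, ‖f' t‖| := by
          rw [intervalIntegral.integral_const_mul, abs_mul, abs_of_nonneg hC₀]
  calc ‖∫ t in a..b, u' t • f t‖
      ≤ ‖u b • f b‖ + ‖u a • f a‖ + ‖∫ t in a..b, u t • f' t‖ := by
        rw [by_parts]
        exact norm_sub_le_of_le (norm_sub_le _ _) le_rfl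
    _ ≤ C * ‖f b‖ + C * ‖f a‖ + C * |∫ t in a..b, ‖f' t‖| :=
        add_le_add_three (norm_smul_le_mul right_mem_uIcc _) (norm_smul_le_mul left_mem_uIcc _)
          remainder
    _ = C * (‖f a‖ + ‖f b‖ + |∫ t in a..b, ‖f' t‖|) := by ring

theorem norm_ofReal_cpow_I_mul {x : ℝ} (hx : 0 < x) (t : ℝ) : ‖(x : ℂ) ^ (I * t)‖ = 1 := by
  simp [norm_cpow_eq_rpow_re_of_pos hx]

theorem hasDerivAt_const_cpow_mul_div {c w : ℂ} (h : w * log c ≠ 0) (t : ℝ) :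
    HasDerivAt (fun s : ℝ ↦ c ^ (w * s) / (w * log c)) (c ^ (w * t)) t := by
  obtain ⟨hw, hlog⟩ := mul_ne_zero_iff.mp h
  have hc : c ≠ 0 := by
    rintro rfl
    exact hlog log_zero
  have exponent : HasDerivAt (fun s : ℂ ↦ w * s) w t := hasDerivAt_const_mul w
  refine ((exponent.const_cpow (.inl hc)).div_const (w * log c)).comp_ofReal.congr_deriv ?_
  field_simp

theorem norm_integral_ofReal_cpow_I_mul_smul_le {E : Type*} [NormedAddCommGroup E]
    [NormedSpace ℂ E] [CompleteSpace E] {x : ℝ} (hx : 0 < x) (hx1 : x ≠ 1) {f f' : ℝ → E}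
    (hf : ∀ t ∈ [[a, b]], HasDerivAt f (f' t) t) (hf' : IntervalIntegrable f' volume a b) :
    ‖∫ t in a..b, (x : ℂ) ^ (I * t) • f t‖ ≤
      (‖f a‖ + ‖f b‖ + |∫ t in a..b, ‖f' t‖|) / |Real.log x| := by
  have hlog : log (x : ℂ) ≠ 0 := by
    rw [← ofReal_log hx.le]
    exact_mod_cast Real.log_ne_zero_of_pos_of_ne_one hx hx1
  have hcont : Continuous fun t : ℝ ↦ (x : ℂ) ^ (I * t) :=
    (continuous_const.mul continuous_ofReal).const_cpow (.inl (ofReal_ne_zero.mpr hx.ne'))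
  have norm_primitive (t : ℝ) : ‖(x : ℂ) ^ (I * t) / (I * log x)‖ = |Real.log x|⁻¹ := by
    rw [norm_div, norm_ofReal_cpow_I_mul hx, norm_mul, norm_I, one_mul, ← ofReal_log hx.le,
      norm_real, Real.norm_eq_abs, one_div]
  rw [div_eq_inv_mul]
  exact norm_integral_deriv_smul_le
    (fun t _ ↦ hasDerivAt_const_cpow_mul_div (mul_ne_zero I_ne_zero hlog) t) hf
    (hcont.intervalIntegrable a b) hf' fun t _ ↦ (norm_primitive t).le

theorem hasDerivAt_ofReal_cpow_const_of_ne_zero {t : ℝ} (ht : t ≠ 0) (s : ℂ) :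
    HasDerivAt (fun r : ℝ ↦ (r : ℂ) ^ s) (s * (t : ℂ) ^ (s - 1)) t := by
  rcases eq_or_ne s 0 with rfl | hs
  · simpa using hasDerivAt_const t (1 : ℂ)
  · exact hasDerivAt_ofReal_cpow_const ht hs

theorem integral_norm_mul_cpow_sub_one_of_re_eq_zero (ha : 0 < a) (hb : 0 < b) {s : ℂ}
    (hs : s.re = 0) : ∫ t in a..b, ‖s * (t : ℂ) ^ (s - 1)‖ = ‖s‖ * Real.log (b / a) := by
  rw [← integral_inv_of_pos ha hb, ← intervalIntegral.integral_const_mul]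
  refine intervalIntegral.integral_congr fun t ht ↦ ?_
  have ht₀ : 0 < t := (lt_min ha hb).trans_le ht.1
  simp [norm_cpow_eq_rpow_re_of_pos ht₀, hs, Real.rpow_neg_one]

theorem oscillatory_integral_bound_general (A : ℝ) {x : ℝ} (hx : 0 < x) (hx1 : x ≠ 1)
    (ha : 0 < a) (hb : 0 < b) :
    ‖∫ t in a..b, (x : ℂ) ^ (I * t) * (t : ℂ) ^ (I * A)‖ ≤
      (2 + |A| * |Real.log (b / a)|) / |Real.log x| := by
  have h0 : (0 : ℝ) ∉ [[a, b]] := notMem_uIcc_of_lt ha hb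
  have hderiv : ∀ t ∈ [[a, b]], HasDerivAt (fun t : ℝ ↦ (t : ℂ) ^ (I * A))
      (I * A * (t : ℂ) ^ (I * A - 1)) t := fun t ht ↦
    hasDerivAt_ofReal_cpow_const_of_ne_zero (ne_of_mem_of_not_mem ht h0) _
  have hint : IntervalIntegrable (fun t : ℝ ↦ I * A * (t : ℂ) ^ (I * A - 1)) volume a b :=
    (intervalIntegral.intervalIntegrable_cpow (.inr h0)).const_mul _
  have variation : ∫ t in a..b, ‖I * A * (t : ℂ) ^ (I * A - 1)‖ = |A| * Real.log (b / a) := by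
    rw [integral_norm_mul_cpow_sub_one_of_re_eq_zero ha hb (by simp), norm_mul, norm_I, one_mul,
      norm_real, Real.norm_eq_abs]
  have bound := norm_integral_ofReal_cpow_I_mul_smul_le hx hx1 hderiv hint
  rwa [norm_ofReal_cpow_I_mul ha, norm_ofReal_cpow_I_mul hb, one_add_one_eq_two, variation,
    abs_mul, abs_abs] at bound

end

/-- First-derivative bound for the oscillatory integral
`∫_{αT}^{2αT} x^{it} t^{iA} dt` when `x ≠ 1`. -/
theorem oscillatory_integral_bound (A : ℝ) (x : ℝ) (hx : 0 < x) (hx1 : x ≠ 1)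
    (α : ℝ) (hα : 0 < α) (T : ℝ) (hT : 1 ≤ T) :
    ‖∫ t in (α * T)..(2 * α * T), (x : ℂ) ^ (Complex.I * t) * (t : ℂ) ^ (Complex.I * A)‖ ≤
      (2 + |A| * Real.log 2) / |Real.log x| := by
  have ha : 0 < α * T := by positivity
  simpa [mul_assoc, ha.ne', abs_of_pos (Real.log_pos one_lt_two)] using
    oscillatory_integral_bound_general A hx hx1 ha (b := 2 * α * T) (by positivity)
end

section
/- Let α > 0. There is a constant C (which may depend on α) such that for every T ≥ 1 and every positive integer n with T ≤ 2πn ≤ 2T, |∫_{αT}^{2αT} e^{i(t log(t/(2πenα)) − π/4)} dt − 2π √(nα) e^{−2πinα}| ≤ C ( T^{2/5} + min(√T, 1/|log(T/(2πn))|) + min(√T, 1/|log(T/(πn))|) ), with the convention that min(√T, 1/|log(T/(2πn))|) = √T when 2πn = T and min(√T, 1/|log(T/(πn))|) = √T when πn = T. -/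
open Complex
open scoped Classical Real

/-!
On each side of the stationary point, within distance `δ` of it, the phase may be replaced by its
quadratic Taylor polynomial, at a cost of `O(K δ ^ 4)` when `φ''` has Lipschitz constant `K`; this
leaves a truncated Fresnel integral. Beyond distance `δ` we have `φ' ≥ m δ` when `φ'' ≥ m`, and one
integration by parts bounds the remaining integral by `O(1 / (m δ))`. If an endpoint lies closer
than `δ` to the stationary point, truncating the Fresnel integral there costs at most a multiple of
the reciprocal of the (linearised) derivative of the phase at that endpoint, capped at
`φ''(x₀) ^ (-1/2)`: these are the two logarithmic error terms. The
Fresnel integrals themselves are limits of Gaussian integrals with complex parameter.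

For the phase `t * log (t / (e * c))` the stationary point is `c` and `φ''(t) = 1 / t`. On a dyadic
interval at height `T`, `m` has order `1 / T` and `K` has order `1 / T ^ 2`.
-/

open Set MeasureTheory Filter Topology

theorem norm_integral_smul_deriv_le_of_antitone {F : Type*} [NormedAddCommGroup F]
    [NormedSpace ℝ F] [CompleteSpace F] {u u' : ℝ → ℝ} {v v' : ℝ → F} {a b M : ℝ} (hab : a ≤ b)
    (hu : ∀ x ∈ Icc a b, HasDerivAt u (u' x) x) (hu' : ∀ x ∈ Icc a b, u' x ≤ 0) (hub : 0 ≤ u b)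
    (hv : ∀ x ∈ Icc a b, HasDerivAt v (v' x) x) (hv' : IntervalIntegrable v' volume a b)
    (hM : ∀ x ∈ Icc a b, ‖v x‖ ≤ M) :
    ‖∫ x in a..b, u x • v' x‖ ≤ 2 * M * u a := by
  have hmem_a : a ∈ Icc a b := left_mem_Icc.2 hab
  have hmem_b : b ∈ Icc a b := right_mem_Icc.2 hab
  have hu'_int : IntervalIntegrable u' volume a b := by
    refine (intervalIntegral.intervalIntegrable_deriv_of_nonneg (g := fun x ↦ -u x)
      (g' := fun x ↦ -u' x) ?_ ?_ ?_).neg.congr (by simp [EqOn])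
    all_goals simp only [uIcc_of_le hab, min_eq_left hab, max_eq_right hab]
    · exact fun x hx ↦ (hu x hx).continuousAt.neg.continuousWithinAt
    · exact fun x hx ↦ (hu x (Ioo_subset_Icc_self hx)).neg
    · exact fun x hx ↦ neg_nonneg.2 (hu' x (Ioo_subset_Icc_self hx))
  rw [← uIcc_of_le hab] at hu hv
  have hvar : ∫ x in a..b, -u' x * M = (u a - u b) * M := by
    rw [intervalIntegral.integral_mul_const, intervalIntegral.integral_neg,
      intervalIntegral.integral_eq_sub_of_hasDerivAt hu hu'_int, neg_sub]
  have hrest : ‖∫ x in a..b, u' x • v x‖ ≤ (u a - u b) * M := by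
    rw [← hvar]
    refine intervalIntegral.norm_integral_le_of_norm_le hab (ae_of_all _ fun x hx ↦ ?_)
      (hu'_int.neg.mul_const M)
    have hx := Ioc_subset_Icc_self hx
    rw [norm_smul, Real.norm_of_nonpos (hu' x hx)]
    exact mul_le_mul_of_nonneg_left (hM x hx) (neg_nonneg.2 (hu' x hx))
  have hmono : u b ≤ u a := by
    have h : 0 ≤ ∫ x in a..b, -u' x :=
      intervalIntegral.integral_nonneg hab fun x hx ↦ neg_nonneg.2 (hu' x hx)
    rw [intervalIntegral.integral_neg,
      intervalIntegral.integral_eq_sub_of_hasDerivAt hu hu'_int] at h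
    linarith
  have hbdry {x : ℝ} (hx : x ∈ Icc a b) (h0 : 0 ≤ u x) : ‖u x • v x‖ ≤ u x * M := by
    rw [norm_smul, Real.norm_of_nonneg h0]
    exact mul_le_mul_of_nonneg_left (hM x hx) h0
  rw [intervalIntegral.integral_smul_deriv_eq_deriv_smul hu hv hu'_int hv']
  calc ‖u b • v b - u a • v a - ∫ x in a..b, u' x • v x‖
      ≤ ‖u b • v b‖ + ‖u a • v a‖ + ‖∫ x in a..b, u' x • v x‖ :=
        (norm_sub_le _ _).trans (add_le_add_left (norm_sub_le _ _) _)
    _ ≤ u b * M + u a * M + (u a - u b) * M := by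
        gcongr
        exacts [hbdry hmem_b hub, hbdry hmem_a (hub.trans hmono)]
    _ = 2 * M * u a := by ring

theorem norm_mul_norm_integral_le_of_hasDerivAt_mul {E : ℝ → ℂ} {r r' : ℝ → ℝ} {k : ℂ}
    {a b M : ℝ} (hab : a ≤ b) (hE : ∀ x ∈ Icc a b, HasDerivAt E (k * r x * E x) x)
    (hM : ∀ x ∈ Icc a b, ‖E x‖ ≤ M) (hr : ∀ x ∈ Icc a b, HasDerivAt r (r' x) x)
    (hr' : ∀ x ∈ Icc a b, 0 ≤ r' x) (ha : 0 < r a) :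
    ‖k‖ * ‖∫ x in a..b, E x‖ ≤ 2 * M / r a := by
  have hr_cont : ContinuousOn r (Icc a b) := HasDerivAt.continuousOn hr
  have hE_cont : ContinuousOn E (Icc a b) := HasDerivAt.continuousOn hE
  have hmono : MonotoneOn r (Icc a b) :=
    monotoneOn_of_hasDerivWithinAt_nonneg (convex_Icc a b) hr_cont
      (fun x hx ↦ (hr x (interior_subset hx)).hasDerivWithinAt)
      fun x hx ↦ hr' x (interior_subset hx)
  have hpos : ∀ x ∈ Icc a b, 0 < r x := fun x hx ↦
    ha.trans_le (hmono (left_mem_Icc.2 hab) hx hx.1)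
  have hE'_int : IntervalIntegrable (fun x ↦ k * r x * E x) volume a b := by
    refine ContinuousOn.intervalIntegrable ?_
    rw [uIcc_of_le hab]
    fun_prop
  have hcongr : ∫ x in a..b, (r x)⁻¹ • (k * r x * E x) = k * ∫ x in a..b, E x := by
    rw [← intervalIntegral.integral_const_mul]
    refine intervalIntegral.integral_congr fun x hx ↦ ?_
    rw [uIcc_of_le hab] at hx
    have : (r x : ℂ) ≠ 0 := ofReal_ne_zero.2 (hpos x hx).ne'
    simp only [real_smul, ofReal_inv]
    field_simp
  rw [← norm_mul, ← hcongr, div_eq_mul_inv]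
  exact norm_integral_smul_deriv_le_of_antitone hab (fun x hx ↦ (hr x hx).inv (hpos x hx).ne')
    (fun x hx ↦ div_nonpos_of_nonpos_of_nonneg (neg_nonpos.2 (hr' x hx)) (sq_nonneg _))
    (inv_nonneg.2 (hpos b (right_mem_Icc.2 hab)).le) hE hE'_int hM

theorem norm_integral_cexp_I_mul_le_of_monotone_deriv {φ φ' φ'' : ℝ → ℝ} {a b : ℝ} (hab : a ≤ b)
    (hφ : ∀ x ∈ Icc a b, HasDerivAt φ (φ' x) x) (hφ' : ∀ x ∈ Icc a b, HasDerivAt φ' (φ'' x) x)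
    (hφ'' : ∀ x ∈ Icc a b, 0 ≤ φ'' x) (ha : 0 < φ' a) :
    ‖∫ x in a..b, cexp (I * φ x)‖ ≤ 2 / φ' a := by
  have h := norm_mul_norm_integral_le_of_hasDerivAt_mul (k := I) (M := 1) hab
    (fun x hx ↦ ((hφ x hx).ofReal_comp.const_mul I).cexp.congr_deriv (mul_comm _ _))
    (fun x _ ↦ (norm_exp_I_mul_ofReal _).le) hφ' hφ'' ha
  simpa using h

theorem norm_integral_cexp_neg_mul_sq_le {b : ℂ} (hb : 0 ≤ b.re) {x y : ℝ} (hx : 0 < x)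
    (hxy : x ≤ y) : ‖b‖ * ‖∫ s in x..y, cexp (-b * (s : ℂ) ^ 2)‖ ≤ 1 / x := by
  have h := norm_mul_norm_integral_le_of_hasDerivAt_mul (E := fun s : ℝ ↦ cexp (-b * (s : ℂ) ^ 2))
    (r := id) (k := -(2 * b)) (M := 1) hxy ?_ ?_ (fun s _ ↦ hasDerivAt_id s)
    (fun _ _ ↦ zero_le_one) hx
  · rw [norm_neg, norm_mul, norm_ofNat, mul_assoc, mul_div_assoc] at h
    exact le_of_mul_le_mul_left h two_pos
  · intro s _
    refine ((hasDerivAt_id s).ofReal_comp.pow 2 |>.const_mul (-b)).cexp.congr_deriv ?_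
    simp only [id_eq, Pi.pow_apply, neg_mul, Nat.cast_ofNat, Nat.add_one_sub_one, pow_one,
      ofReal_one, mul_one, mul_neg, neg_inj]
    ring
  · intro s _
    rw [norm_exp, Real.exp_le_one_iff, ← ofReal_pow, re_mul_ofReal, neg_re]
    linarith [mul_nonneg hb (sq_nonneg s)]

theorem norm_integral_cexp_neg_mul_sq_sub_le_of_re_pos {b : ℂ} (hb : 0 < b.re) {x : ℝ}
    (hx : 0 < x) :
    ‖(∫ s in (0 : ℝ)..x, cexp (-b * (s : ℂ) ^ 2)) - (π / b) ^ (1 / 2 : ℂ) / 2‖ ≤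
      1 / (‖b‖ * x) := by
  have hint : Integrable fun s : ℝ ↦ cexp (-b * (s : ℂ) ^ 2) := integrable_cexp_neg_mul_sq hb
  have hlim := intervalIntegral_tendsto_integral_Ioi (0 : ℝ) hint.integrableOn tendsto_id
  rw [integral_gaussian_complex_Ioi hb] at hlim
  refine le_of_tendsto (hlim.const_sub _).norm ?_
  filter_upwards [eventually_ge_atTop x] with y hxy
  have hb0 : 0 < ‖b‖ := norm_pos_iff.2 fun h ↦ by simp [h] at hb
  rw [id, intervalIntegral.integral_interval_sub_left hint.intervalIntegrable
    hint.intervalIntegrable, intervalIntegral.integral_symm, norm_neg, ← div_div, div_right_comm,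
    le_div_iff₀' hb0]
  exact norm_integral_cexp_neg_mul_sq_le hb.le hx hxy

theorem norm_integral_cexp_neg_mul_sq_sub_le {b : ℂ} (hb : 0 ≤ b.re) (hb0 : b ≠ 0) {x : ℝ}
    (hx : 0 < x) :
    ‖(∫ s in (0 : ℝ)..x, cexp (-b * (s : ℂ) ^ 2)) - (π / b) ^ (1 / 2 : ℂ) / 2‖ ≤
      1 / (‖b‖ * x) := by
  have hnormSq : 0 < normSq b := normSq_pos.2 hb0
  have hslit : (π / b : ℂ) ∈ slitPlane := by
    rw [mem_slitPlane_iff]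
    rcases hb.lt_or_eq with hre | hre
    · left
      rw [div_re, ofReal_re, ofReal_im, zero_mul, zero_div, add_zero]
      positivity
    · right
      have him : b.im ≠ 0 := fun him ↦ hb0 (Complex.ext hre.symm him)
      simpa [div_im] using ⟨him, hb0⟩
  have hint_cont : Continuous fun z : ℂ ↦ ∫ s in (0 : ℝ)..x, cexp (-z * (s : ℂ) ^ 2) :=
    intervalIntegral.continuous_parametric_intervalIntegral_of_continuous' (by fun_prop) _ _
  have hroot_cont : ContinuousAt (fun z : ℂ ↦ (π / z : ℂ) ^ (1 / 2 : ℂ)) b :=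
    (continuousAt_const.div continuousAt_id hb0).cpow continuousAt_const hslit
  have hbound_cont : ContinuousAt (fun z : ℂ ↦ 1 / (‖z‖ * x)) b :=
    continuousAt_const.div (by fun_prop) (mul_pos (norm_pos_iff.2 hb0) hx).ne'
  have hpath : Tendsto (fun ε : ℝ ↦ b + (ε : ℂ)) (𝓝[>] 0) (𝓝 b) := by
    have h : Continuous fun ε : ℝ ↦ b + (ε : ℂ) := by fun_prop
    simpa using (h.tendsto 0).mono_left nhdsWithin_le_nhds
  refine le_of_tendsto_of_tendsto
    ((hint_cont.continuousAt.sub (hroot_cont.div_const 2)).norm.tendsto.comp hpath)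
    (hbound_cont.tendsto.comp hpath) ?_
  filter_upwards [self_mem_nhdsWithin] with ε hε
  exact norm_integral_cexp_neg_mul_sq_sub_le_of_re_pos
    (by simpa using add_pos_of_nonneg_of_pos hb hε) hx

/-- `min M (1 / x)` for `x ≥ 0`, read as `M` at `x = 0`, where Lean's `1 / 0 = 0` would make the
minimum vanish. It is the size of an endpoint contribution to an oscillatory integral. -/
noncomputable def cappedInv (M x : ℝ) : ℝ := if x = 0 then M else min M (1 / x)

theorem cappedInv_nonneg {M x : ℝ} (hM : 0 ≤ M) (hx : 0 ≤ x) : 0 ≤ cappedInv M x := by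
  unfold cappedInv
  split_ifs <;> positivity

theorem le_cappedInv {M x y : ℝ} (hM : y ≤ M) (hx : 0 < x → y ≤ 1 / x) (hx0 : 0 ≤ x) :
    y ≤ cappedInv M x := by
  unfold cappedInv
  split_ifs with h
  exacts [hM, le_min hM (hx (hx0.lt_of_ne' h))]

theorem cappedInv_le_mul_cappedInv {K M N x y : ℝ} (hK : 0 ≤ K) (hx : 0 ≤ x) (hy : 0 ≤ y)
    (hMN : M ≤ K * N) (hyx : y ≤ K * x) : cappedInv M x ≤ K * cappedInv N y := by
  have hM : cappedInv M x ≤ M := by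
    unfold cappedInv
    split_ifs
    exacts [le_rfl, min_le_left _ _]
  rcases hy.eq_or_lt with rfl | hy
  · simpa [cappedInv] using hM.trans hMN
  have hx : 0 < x := hx.lt_of_ne fun h ↦ by simp [← h, hy.not_ge] at hyx
  rw [cappedInv, cappedInv, if_neg hx.ne', if_neg hy.ne', mul_min_of_nonneg _ _ hK]
  refine min_le_min hMN ?_
  rw [mul_one_div]
  exact (div_le_div_iff₀ hx hy).2 (by simpa using hyx)

theorem cappedInv_abs_log_div {M x y : ℝ} (hx : 0 < x) (hy : 0 < y) :
    cappedInv M |Real.log (x / y)| =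
      if x = y then M else min M (1 / |Real.log (x / y)|) := by
  have h : |Real.log (x / y)| = 0 ↔ x = y := by
    rw [abs_eq_zero, Real.log_div hx.ne' hy.ne', sub_eq_zero, Real.log_injOn_pos.eq_iff hx hy]
  simp only [cappedInv, h]

/-- The value `√(π / (2κ)) e^{iπ/4}` of the Fresnel integral `∫ s in (0, ∞), e^{iκs²/2}`, which is
the contribution to a stationary phase integral of each side of the stationary point. -/
noncomputable def halfFresnel (κ : ℝ) : ℂ := √(π / (2 * κ)) * cexp (I * (π / 4 : ℝ))

theorem norm_halfFresnel (κ : ℝ) : ‖halfFresnel κ‖ = √(π / (2 * κ)) := by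
  rw [halfFresnel, norm_mul, norm_exp_I_mul_ofReal, mul_one, norm_real,
    Real.norm_of_nonneg (Real.sqrt_nonneg _)]

theorem ofReal_mul_I_cpow_half {r : ℝ} (hr : 0 < r) :
    ((r : ℂ) * I) ^ (1 / 2 : ℂ) = √r * cexp (I * (π / 4 : ℝ)) := by
  rw [cpow_def_of_ne_zero (mul_ne_zero (ofReal_ne_zero.2 hr.ne') I_ne_zero),
    log_ofReal_mul hr I_ne_zero, log_I, Real.sqrt_eq_rpow, Real.rpow_def_of_pos hr, ofReal_exp,
    ← Complex.exp_add]
  push_cast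
  ring_nf

theorem cpow_half_pi_div_neg_I_mul {κ : ℝ} (hκ : 0 < κ) :
    ((π : ℂ) / -(I * (κ / 2))) ^ (1 / 2 : ℂ) / 2 = halfFresnel κ := by
  have hquot : (π : ℂ) / -(I * (κ / 2)) = ((2 ^ 2 * (π / (2 * κ)) : ℝ) : ℂ) * I := by
    have : (κ : ℂ) ≠ 0 := ofReal_ne_zero.2 hκ.ne'
    push_cast
    field_simp
    simp
  rw [hquot, ofReal_mul_I_cpow_half (by positivity), Real.sqrt_mul (by positivity),
    Real.sqrt_sq two_pos.le, halfFresnel]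
  push_cast
  ring

theorem norm_integral_fresnel_sub_le {κ x : ℝ} (hκ : 0 < κ) (hx : 0 < x) :
    ‖(∫ s in (0 : ℝ)..x, cexp (I * (κ * s ^ 2 / 2 : ℝ))) - halfFresnel κ‖ ≤ 2 / (κ * x) := by
  have hre : 0 ≤ (-(I * (κ / 2 : ℂ))).re := by simp
  have hne : -(I * (κ / 2 : ℂ)) ≠ 0 := by simp [hκ.ne']
  have hnorm : ‖-(I * (κ / 2 : ℂ))‖ = κ / 2 := by simp [abs_of_pos hκ]
  have h := norm_integral_cexp_neg_mul_sq_sub_le hre hne hx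
  rw [cpow_half_pi_div_neg_I_mul hκ, hnorm] at h
  convert h using 1
  · congr! 5
    push_cast
    ring
  · field_simp

theorem norm_integral_fresnel_sub_le_cappedInv {κ x : ℝ} (hκ : 0 < κ) (hx : 0 ≤ x) :
    ‖(∫ s in (0 : ℝ)..x, cexp (I * (κ * s ^ 2 / 2 : ℝ))) - halfFresnel κ‖ ≤
      3 * cappedInv (√κ)⁻¹ (κ * x) := by
  have hsqrt : 0 < √κ := Real.sqrt_pos.2 hκ
  have hsq : √κ * √κ = κ := Real.mul_self_sqrt hκ.le
  rw [← div_le_iff₀' three_pos]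
  refine le_cappedInv ?_ (fun hκx ↦ ?_) (by positivity)
  · rw [div_le_iff₀' three_pos]
    rcases le_total (√κ)⁻¹ x with hcap | hcap
    · have hx : 0 < x := (inv_pos.2 hsqrt).trans_le hcap
      calc _ ≤ 2 / (κ * x) := norm_integral_fresnel_sub_le hκ hx
        _ ≤ 2 / (κ * (√κ)⁻¹) := by gcongr
        _ = 2 * (√κ)⁻¹ := by
          nth_rw 1 [← hsq]
          field_simp
        _ ≤ 3 * (√κ)⁻¹ := by gcongr; norm_num
    · have hint : ‖∫ s in (0 : ℝ)..x, cexp (I * (κ * s ^ 2 / 2 : ℝ))‖ ≤ 1 * |x - 0| :=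
        intervalIntegral.norm_integral_le_of_norm_le_const fun s _ ↦ (norm_exp_I_mul_ofReal _).le
      have hmain : √(π / (2 * κ)) ≤ 2 * (√κ)⁻¹ := by
        rw [← div_div, Real.sqrt_div (by positivity), div_eq_mul_inv]
        gcongr
        exact Real.sqrt_le_iff.2 ⟨two_pos.le, by linarith [Real.pi_lt_four]⟩
      calc _ ≤ _ := norm_sub_le _ _
        _ ≤ x + 2 * (√κ)⁻¹ := by
          rw [norm_halfFresnel]
          gcongr
          simpa [abs_of_nonneg hx] using hint
        _ ≤ 3 * (√κ)⁻¹ := by linarith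
  · have hx : 0 < x := pos_of_mul_pos_right hκx hκ.le
    rw [div_le_iff₀' three_pos, mul_one_div]
    exact (norm_integral_fresnel_sub_le hκ hx).trans (by gcongr; norm_num)

theorem norm_sub_le_mul_pow_succ {F : Type*} [NormedAddCommGroup F] [NormedSpace ℝ F]
    {g g' : ℝ → F} {A x : ℝ} {k : ℕ} (hg : ∀ s ∈ Icc 0 x, HasDerivAt g (g' s) s)
    (hg' : ∀ s ∈ Icc 0 x, ‖g' s‖ ≤ A * s ^ k) (hx : 0 ≤ x) :
    ‖g x - g 0‖ ≤ A * x ^ (k + 1) := by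
  rcases hx.eq_or_lt with rfl | hx0
  · simp
  have hA : 0 ≤ A := nonneg_of_mul_nonneg_left
    ((norm_nonneg _).trans (hg' x (right_mem_Icc.2 hx))) (pow_pos hx0 k)
  have h := (convex_Icc 0 x).norm_image_sub_le_of_norm_hasDerivWithin_le
    (fun s hs ↦ (hg s hs).hasDerivWithinAt) (C := A * x ^ k)
    (fun s hs ↦ (hg' s hs).trans (by have := hs.1; have := hs.2; gcongr))
    (left_mem_Icc.2 hx) (right_mem_Icc.2 hx)
  rwa [sub_zero, Real.norm_of_nonneg hx, mul_assoc, ← pow_succ] at h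

theorem norm_cexp_I_mul_sub_le (x y : ℝ) : ‖cexp (I * x) - cexp (I * y)‖ ≤ |x - y| := by
  have h : cexp (I * x) - cexp (I * y) = cexp (I * y) * (cexp (I * (x - y : ℝ)) - 1) := by
    rw [mul_sub, mul_one, ← Complex.exp_add]
    push_cast
    ring_nf
  rw [h, norm_mul, norm_exp_I_mul_ofReal, one_mul]
  exact Real.norm_exp_I_mul_ofReal_sub_one_le

section StationaryPhase

variable {φ φ' φ'' : ℝ → ℝ}

theorem abs_sub_quadratic_le {K x : ℝ} (hx : 0 ≤ x)
    (hφ : ∀ s ∈ Icc 0 x, HasDerivAt φ (φ' s) s) (hφ' : ∀ s ∈ Icc 0 x, HasDerivAt φ' (φ'' s) s)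
    (h0 : φ' 0 = 0) (hK : ∀ s ∈ Icc 0 x, |φ'' s - φ'' 0| ≤ K * s) :
    |φ x - (φ 0 + φ'' 0 * x ^ 2 / 2)| ≤ K * x ^ 3 := by
  have hlin : ∀ s ∈ Icc 0 x, |φ' s - φ'' 0 * s| ≤ K * s ^ 2 := fun s hs ↦ by
    have hsub : Icc 0 s ⊆ Icc 0 x := Icc_subset_Icc_right hs.2
    simpa [h0] using norm_sub_le_mul_pow_succ (g := fun t ↦ φ' t - φ'' 0 * t) (A := K) (k := 1)
      (fun t ht ↦ (hφ' t (hsub ht)).sub ((hasDerivAt_id t).const_mul _))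
      (fun t ht ↦ by simpa using hK t (hsub ht)) hs.1
  have hquad (t : ℝ) : HasDerivAt (fun t ↦ φ'' 0 * t ^ 2 / 2) (φ'' 0 * t) t :=
    (((hasDerivAt_pow 2 t).const_mul (φ'' 0)).div_const 2).congr_deriv (by norm_num; ring)
  have h := norm_sub_le_mul_pow_succ (fun t ht ↦ (hφ t ht).sub (hquad t)) hlin hx
  simp only [Pi.sub_apply, Real.norm_eq_abs] at h
  convert h using 2
  ring

theorem norm_integral_cexp_sub_quadratic_le {K x : ℝ} (hx : 0 ≤ x)
    (hφ : ∀ s ∈ Icc 0 x, HasDerivAt φ (φ' s) s) (hφ' : ∀ s ∈ Icc 0 x, HasDerivAt φ' (φ'' s) s)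
    (h0 : φ' 0 = 0) (hK0 : 0 ≤ K) (hK : ∀ s ∈ Icc 0 x, |φ'' s - φ'' 0| ≤ K * s) :
    ‖(∫ s in (0 : ℝ)..x, cexp (I * φ s)) -
        cexp (I * φ 0) * ∫ s in (0 : ℝ)..x, cexp (I * (φ'' 0 * s ^ 2 / 2 : ℝ))‖ ≤ K * x ^ 4 := by
  have hcont : ContinuousOn φ (uIcc 0 x) := by
    rw [uIcc_of_le hx]
    exact HasDerivAt.continuousOn hφ
  have hmerge : (cexp (I * φ 0) * ∫ s in (0 : ℝ)..x, cexp (I * (φ'' 0 * s ^ 2 / 2 : ℝ))) =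
      ∫ s in (0 : ℝ)..x, cexp (I * (φ 0 + φ'' 0 * s ^ 2 / 2 : ℝ)) := by
    simp_rw [← intervalIntegral.integral_const_mul, ← Complex.exp_add, ← mul_add, ← ofReal_add]
  rw [hmerge, ← intervalIntegral.integral_sub
    (ContinuousOn.intervalIntegrable (by fun_prop))
    (Continuous.intervalIntegrable (by fun_prop) _ _)]
  refine (intervalIntegral.norm_integral_le_of_norm_le_const (C := K * x ^ 3)
    fun s hs ↦ ?_).trans_eq (by rw [sub_zero, abs_of_nonneg hx]; ring)
  rw [uIoc_of_le hx] at hs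
  have hsub : Icc 0 s ⊆ Icc 0 x := Icc_subset_Icc_right hs.2
  have := hs.1.le
  calc _ ≤ |φ s - (φ 0 + φ'' 0 * s ^ 2 / 2)| := norm_cexp_I_mul_sub_le _ _
    _ ≤ K * s ^ 3 := abs_sub_quadratic_le hs.1.le (fun t ht ↦ hφ t (hsub ht))
        (fun t ht ↦ hφ' t (hsub ht)) h0 fun t ht ↦ hK t (hsub ht)
    _ ≤ K * x ^ 3 := by gcongr; exact hs.2

theorem norm_integral_cexp_sub_halfFresnel_le_of_small {K x : ℝ} (hx : 0 ≤ x)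
    (hφ : ∀ s ∈ Icc 0 x, HasDerivAt φ (φ' s) s) (hφ' : ∀ s ∈ Icc 0 x, HasDerivAt φ' (φ'' s) s)
    (h0 : φ' 0 = 0) (hK0 : 0 ≤ K) (hK : ∀ s ∈ Icc 0 x, |φ'' s - φ'' 0| ≤ K * s) :
    ‖(∫ s in (0 : ℝ)..x, cexp (I * φ s)) - cexp (I * φ 0) * halfFresnel (φ'' 0)‖ ≤ K * x ^ 4 +
      ‖(∫ s in (0 : ℝ)..x, cexp (I * (φ'' 0 * s ^ 2 / 2 : ℝ))) - halfFresnel (φ'' 0)‖ := by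
  refine (norm_sub_le_norm_sub_add_norm_sub _ _ _).trans
    (add_le_add (norm_integral_cexp_sub_quadratic_le hx hφ hφ' h0 hK0 hK) ?_)
  rw [← mul_sub, norm_mul, norm_exp_I_mul_ofReal, one_mul]

theorem norm_integral_cexp_I_mul_le_of_le_deriv_deriv {m B δ : ℝ}
    (hδB : δ ≤ B) (hφ : ∀ s ∈ Icc 0 B, HasDerivAt φ (φ' s) s)
    (hφ' : ∀ s ∈ Icc 0 B, HasDerivAt φ' (φ'' s) s) (h0 : φ' 0 = 0) (hm0 : 0 < m)
    (hm : ∀ s ∈ Icc 0 B, m ≤ φ'' s) (hδ : 0 < δ) :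
    ‖∫ s in δ..B, cexp (I * φ s)‖ ≤ 2 / (m * δ) := by
  have hφ'δ : m * δ ≤ φ' δ := by
    have h := (convex_Icc 0 B).mul_sub_le_image_sub_of_le_deriv (HasDerivAt.continuousOn hφ')
      (fun s hs ↦ (hφ' s (interior_subset hs)).differentiableAt.differentiableWithinAt)
      (fun s hs ↦ (hm s (interior_subset hs)).trans_eq (hφ' s (interior_subset hs)).deriv.symm)
      0 (left_mem_Icc.2 (hδ.le.trans hδB)) δ ⟨hδ.le, hδB⟩ hδ.le
    simpa [h0] using h
  have hsub : Icc δ B ⊆ Icc 0 B := Icc_subset_Icc_left hδ.le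
  exact (norm_integral_cexp_I_mul_le_of_monotone_deriv hδB (fun s hs ↦ hφ s (hsub hs))
    (fun s hs ↦ hφ' s (hsub hs)) (fun s hs ↦ hm0.le.trans (hm s (hsub hs)))
    ((mul_pos hm0 hδ).trans_le hφ'δ)).trans (by gcongr)

theorem norm_integral_cexp_sub_halfFresnel_le {m K B δ : ℝ} (hB : 0 ≤ B)
    (hφ : ∀ s ∈ Icc 0 B, HasDerivAt φ (φ' s) s) (hφ' : ∀ s ∈ Icc 0 B, HasDerivAt φ' (φ'' s) s)
    (h0 : φ' 0 = 0) (hm0 : 0 < m) (hm : ∀ s ∈ Icc 0 B, m ≤ φ'' s) (hK0 : 0 ≤ K)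
    (hK : ∀ s ∈ Icc 0 B, |φ'' s - φ'' 0| ≤ K * s) (hδ : 0 < δ) :
    ‖(∫ s in (0 : ℝ)..B, cexp (I * φ s)) - cexp (I * φ 0) * halfFresnel (φ'' 0)‖ ≤
      K * δ ^ 4 + 4 / (m * δ) + 3 * cappedInv (√(φ'' 0))⁻¹ (φ'' 0 * B) := by
  have hmκ : m ≤ φ'' 0 := hm 0 (left_mem_Icc.2 hB)
  have hκ : 0 < φ'' 0 := hm0.trans_le hmκ
  rcases le_total B δ with hBδ | hδB
  · calc _ ≤ K * B ^ 4 + 3 * cappedInv (√(φ'' 0))⁻¹ (φ'' 0 * B) :=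
          (norm_integral_cexp_sub_halfFresnel_le_of_small hB hφ hφ' h0 hK0 hK).trans
            (add_le_add_right (norm_integral_fresnel_sub_le_cappedInv hκ hB) _)
      _ ≤ K * δ ^ 4 + 4 / (m * δ) + 3 * cappedInv (√(φ'' 0))⁻¹ (φ'' 0 * B) := by
          gcongr
          exact le_add_of_le_of_nonneg (by gcongr) (by positivity)
  · have hnear_sub : Icc 0 δ ⊆ Icc 0 B := Icc_subset_Icc_right hδB
    have hcont : ContinuousOn (fun s ↦ cexp (I * φ s)) (Icc 0 B) := by
      have := HasDerivAt.continuousOn hφ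
      fun_prop
    have hnear : ‖(∫ s in (0 : ℝ)..δ, cexp (I * φ s)) - cexp (I * φ 0) * halfFresnel (φ'' 0)‖ ≤
        K * δ ^ 4 + 2 / (m * δ) :=
      (norm_integral_cexp_sub_halfFresnel_le_of_small hδ.le (fun s hs ↦ hφ s (hnear_sub hs))
        (fun s hs ↦ hφ' s (hnear_sub hs)) h0 hK0 fun s hs ↦ hK s (hnear_sub hs)).trans
        (add_le_add_right ((norm_integral_fresnel_sub_le hκ hδ).trans (by gcongr)) _)
    have hfar : ‖∫ s in δ..B, cexp (I * φ s)‖ ≤ 2 / (m * δ) :=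
      norm_integral_cexp_I_mul_le_of_le_deriv_deriv hδB hφ hφ' h0 hm0 hm hδ
    have hcap : 0 ≤ cappedInv (√(φ'' 0))⁻¹ (φ'' 0 * B) :=
      cappedInv_nonneg (by positivity) (by positivity)
    rw [← intervalIntegral.integral_add_adjacent_intervals
      ((hcont.mono hnear_sub).intervalIntegrable_of_Icc hδ.le)
      ((hcont.mono (Icc_subset_Icc_left hδ.le)).intervalIntegrable_of_Icc hδB),
      add_sub_right_comm]
    calc _ ≤ K * δ ^ 4 + 2 / (m * δ) + 2 / (m * δ) := norm_add_le_of_le hnear hfar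
      _ = K * δ ^ 4 + 4 / (m * δ) := by ring
      _ ≤ _ := by linarith

theorem norm_integral_cexp_sub_two_mul_halfFresnel_le {m K a b x₀ δ : ℝ}
    (hx₀ : x₀ ∈ Icc a b) (hφ : ∀ x ∈ Icc a b, HasDerivAt φ (φ' x) x)
    (hφ' : ∀ x ∈ Icc a b, HasDerivAt φ' (φ'' x) x) (h0 : φ' x₀ = 0) (hm0 : 0 < m)
    (hm : ∀ x ∈ Icc a b, m ≤ φ'' x) (hK0 : 0 ≤ K)
    (hK : ∀ x ∈ Icc a b, |φ'' x - φ'' x₀| ≤ K * |x - x₀|) (hδ : 0 < δ) :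
    ‖(∫ x in a..b, cexp (I * φ x)) - 2 * cexp (I * φ x₀) * halfFresnel (φ'' x₀)‖ ≤
      2 * (K * δ ^ 4 + 4 / (m * δ)) + 3 * (cappedInv (√(φ'' x₀))⁻¹ (φ'' x₀ * (x₀ - a)) +
        cappedInv (√(φ'' x₀))⁻¹ (φ'' x₀ * (b - x₀))) := by
  have hleft_mem : ∀ s ∈ Icc 0 (x₀ - a), x₀ - s ∈ Icc a b := fun s hs ↦
    ⟨by linarith [hs.2], by linarith [hs.1, hx₀.2]⟩
  have hright_mem : ∀ s ∈ Icc 0 (b - x₀), x₀ + s ∈ Icc a b := fun s hs ↦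
    ⟨by linarith [hs.1, hx₀.1], by linarith [hs.2]⟩
  have hleft := norm_integral_cexp_sub_halfFresnel_le (φ := fun s ↦ φ (x₀ - s))
    (φ' := fun s ↦ -φ' (x₀ - s)) (φ'' := fun s ↦ φ'' (x₀ - s)) (sub_nonneg.2 hx₀.1)
    (fun s hs ↦ (hφ _ (hleft_mem s hs)).comp_const_sub x₀ s)
    (fun s hs ↦ ((hφ' _ (hleft_mem s hs)).comp_const_sub x₀ s).neg.congr_deriv (neg_neg _))
    (by simpa using h0) hm0 (fun s hs ↦ hm _ (hleft_mem s hs)) hK0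
    (fun s hs ↦ by simpa [abs_of_nonneg hs.1] using hK _ (hleft_mem s hs)) hδ
  have hright := norm_integral_cexp_sub_halfFresnel_le (φ := fun s ↦ φ (x₀ + s))
    (φ' := fun s ↦ φ' (x₀ + s)) (φ'' := fun s ↦ φ'' (x₀ + s)) (sub_nonneg.2 hx₀.2)
    (fun s hs ↦ (hφ _ (hright_mem s hs)).comp_const_add x₀ s)
    (fun s hs ↦ (hφ' _ (hright_mem s hs)).comp_const_add x₀ s)
    (by simpa using h0) hm0 (fun s hs ↦ hm _ (hright_mem s hs)) hK0
    (fun s hs ↦ by simpa [abs_of_nonneg hs.1] using hK _ (hright_mem s hs)) hδ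
  have hcont : ContinuousOn (fun x ↦ cexp (I * φ x)) (Icc a b) := by
    have := HasDerivAt.continuousOn hφ
    fun_prop
  have hsplit : (∫ x in a..b, cexp (I * φ x)) =
      (∫ s in (0 : ℝ)..(x₀ - a), cexp (I * φ (x₀ - s))) +
        ∫ s in (0 : ℝ)..(b - x₀), cexp (I * φ (x₀ + s)) := by
    rw [intervalIntegral.integral_comp_sub_left (fun x ↦ cexp (I * φ x)),
      intervalIntegral.integral_comp_add_left (fun x ↦ cexp (I * φ x)), sub_sub_cancel, sub_zero,
      add_zero, add_sub_cancel, intervalIntegral.integral_add_adjacent_intervals]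
    · exact (hcont.mono (Icc_subset_Icc_right hx₀.2)).intervalIntegrable_of_Icc hx₀.1
    · exact (hcont.mono (Icc_subset_Icc_left hx₀.1)).intervalIntegrable_of_Icc hx₀.2
  simp only [sub_zero, add_zero] at hleft hright
  rw [hsplit, mul_assoc, two_mul, add_sub_add_comm]
  refine (norm_add_le_of_le hleft hright).trans_eq ?_
  ring

end StationaryPhase

theorem hasDerivAt_mul_log_div_exp_one_mul {c t : ℝ} (hc : c ≠ 0) (ht : t ≠ 0) :
    HasDerivAt (fun t ↦ t * Real.log (t / (Real.exp 1 * c))) (Real.log t - Real.log c) t := by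
  have hd : Real.exp 1 * c ≠ 0 := mul_ne_zero (Real.exp_ne_zero 1) hc
  refine ((hasDerivAt_id t).mul
    (((hasDerivAt_id t).div_const _).log (div_ne_zero ht hd))).congr_deriv ?_
  rw [id, Real.log_div ht hd, Real.log_mul (Real.exp_ne_zero 1) hc, Real.log_exp]
  field_simp
  ring

theorem two_mul_halfFresnel_inv (c : ℝ) :
    2 * halfFresnel c⁻¹ = √(2 * π * c) * cexp (I * (π / 4 : ℝ)) := by
  have h : √(2 * π * c) = 2 * √(π / (2 * c⁻¹)) := by
    rw [show 2 * π * c = 2 ^ 2 * (π / (2 * c⁻¹)) by field_simp,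
      Real.sqrt_mul (by positivity), Real.sqrt_sq two_pos.le]
  rw [h, halfFresnel]
  push_cast
  ring

theorem norm_integral_cexp_mul_log_sub_le {a b c δ : ℝ} (ha : 0 < a) (hc : c ∈ Icc a b)
    (hδ : 0 < δ) :
    ‖(∫ t in a..b, cexp (I * (t * Real.log (t / (Real.exp 1 * c)) : ℝ))) -
        √(2 * π * c) * cexp (I * (π / 4 : ℝ)) * cexp (-(I * c))‖ ≤
      2 * (δ ^ 4 / a ^ 2 + 4 * b / δ) +
        3 * (cappedInv (√c) ((c - a) / c) + cappedInv (√c) ((b - c) / c)) := by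
  have hc0 : 0 < c := ha.trans_le hc.1
  have hb0 : 0 < b := hc0.trans_le hc.2
  have hpos : ∀ t ∈ Icc a b, 0 < t := fun t ht ↦ ha.trans_le ht.1
  have hcurv : ∀ t ∈ Icc a b, |t⁻¹ - c⁻¹| ≤ 1 / a ^ 2 * |t - c| := fun t ht ↦ by
    have := hpos t ht
    rw [inv_sub_inv this.ne' hc0.ne', abs_div, abs_sub_comm, abs_of_pos (mul_pos this hc0),
      div_eq_inv_mul, ← one_div, pow_two]
    gcongr
    exacts [ht.1, hc.1]
  have h := norm_integral_cexp_sub_two_mul_halfFresnel_le (m := b⁻¹) hc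
    (fun t ht ↦ hasDerivAt_mul_log_div_exp_one_mul hc0.ne' (hpos t ht).ne')
    (fun t ht ↦ (Real.hasDerivAt_log (hpos t ht).ne').sub_const _) (sub_self _)
    (inv_pos.2 hb0) (fun t ht ↦ inv_anti₀ (hpos t ht) ht.2) (by positivity) hcurv hδ
  have hvalue : c * Real.log (c / (Real.exp 1 * c)) = -c := by
    rw [div_mul_cancel_right₀ hc0.ne', Real.log_inv, Real.log_exp, mul_neg_one]
  rw [hvalue, Real.sqrt_inv, inv_inv, mul_right_comm, two_mul_halfFresnel_inv, ofReal_neg,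
    mul_neg] at h
  convert h using 3
  · field_simp
  · rw [div_eq_inv_mul, div_eq_inv_mul]

theorem abs_log_div_le {x y : ℝ} (hx : 0 < x) (hy : 0 < y) :
    |Real.log (x / y)| ≤ |x - y| / min x y := by
  wlog hxy : x ≤ y generalizing x y
  · rw [abs_sub_comm, min_comm, ← abs_neg, ← Real.log_inv, inv_div]
    exact this hy hx (le_of_not_ge hxy)
  have hlog : Real.log (y / x) ≤ y / x - 1 := Real.log_le_sub_one_of_pos (by positivity)
  have hnonneg : 0 ≤ Real.log (y / x) := Real.log_nonneg ((one_le_div hx).2 hxy)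
  rw [← inv_div, Real.log_inv, abs_neg, abs_of_nonneg hnonneg, min_eq_left hxy, abs_sub_comm,
    abs_of_nonneg (sub_nonneg.2 hxy), sub_div, div_self hx.ne']
  exact hlog

theorem cappedInv_le_mul_cappedInv_abs_log_div {α T N X : ℝ} (hα : 0 < α) (hT : 0 < T)
    (hN : N ∈ Icc T (2 * T)) (hX : T ≤ X) :
    cappedInv √(α * N) (|X - N| / N) ≤ (√(2 * α) + 2) * cappedInv √T |Real.log (X / N)| := by
  have hN0 : 0 < N := hT.trans_le hN.1
  have hsqrt : √(α * N) ≤ √(2 * α) * √T := by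
    rw [← Real.sqrt_mul (by positivity)]
    exact Real.sqrt_le_sqrt (by linarith [mul_le_mul_of_nonneg_left hN.2 hα.le])
  have hlog : |Real.log (X / N)| ≤ 2 * (|X - N| / N) :=
    calc _ ≤ |X - N| / min X N := abs_log_div_le (hT.trans_le hX) hN0
      _ ≤ |X - N| / (N / 2) :=
        div_le_div_of_nonneg_left (abs_nonneg _) (by positivity)
          (le_min (by linarith [hN.2]) (by linarith))
      _ = 2 * (|X - N| / N) := by field_simp
  refine cappedInv_le_mul_cappedInv (by positivity) (by positivity) (abs_nonneg _)
    (hsqrt.trans ?_) (hlog.trans ?_)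
  · gcongr
    exact le_add_of_nonneg_right two_pos.le
  · gcongr
    exact le_add_of_nonneg_left (Real.sqrt_nonneg _)

theorem norm_integral_dyadic_cexp_mul_log_sub_le {α T N : ℝ} (hα : 0 < α) (hT : 0 < T)
    (hN : N ∈ Icc T (2 * T)) :
    ‖(∫ t in (α * T)..(α * (2 * T)),
          cexp (I * (t * Real.log (t / (Real.exp 1 * (α * N))) : ℝ))) -
        √(2 * π * (α * N)) * cexp (I * (π / 4 : ℝ)) * cexp (-(I * (α * N : ℝ)))‖ ≤
      2 * (1 / α ^ 2 + 8 * α) * T ^ (2 / 5 : ℝ) + 3 * (√(2 * α) + 2) *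
        (cappedInv √T |Real.log (T / N)| + cappedInv √T |Real.log (2 * T / N)|) := by
  -- `δ = T ^ (3 / 5)` balances the terms `δ ^ 4 / T ^ 2` and `T / δ`.
  have h := norm_integral_cexp_mul_log_sub_le (mul_pos hα hT)
    (mem_Icc.2 ⟨mul_le_mul_of_nonneg_left hN.1 hα.le, mul_le_mul_of_nonneg_left hN.2 hα.le⟩)
    (Real.rpow_pos_of_pos hT (3 / 5))
  have hpow : (T ^ (3 / 5 : ℝ)) ^ 4 = T ^ 2 * T ^ (2 / 5 : ℝ) := by
    rw [← Real.rpow_mul_natCast hT.le, ← Real.rpow_natCast T 2, ← Real.rpow_add hT]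
    norm_num
  have hdiv : T / T ^ (3 / 5 : ℝ) = T ^ (2 / 5 : ℝ) := by
    rw [← Real.rpow_one_sub' hT.le (by norm_num)]
    norm_num
  have hbulk : (T ^ (3 / 5 : ℝ)) ^ 4 / (α * T) ^ 2 + 4 * (α * (2 * T)) / T ^ (3 / 5 : ℝ) =
      (1 / α ^ 2 + 8 * α) * T ^ (2 / 5 : ℝ) := by
    rw [hpow, ← hdiv]
    field_simp
    ring
  have hleft := cappedInv_le_mul_cappedInv_abs_log_div hα hT hN le_rfl
  have hright := cappedInv_le_mul_cappedInv_abs_log_div hα hT hN (X := 2 * T) (by linarith)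
  rw [abs_sub_comm, abs_of_nonneg (sub_nonneg.2 hN.1)] at hleft
  rw [abs_of_nonneg (sub_nonneg.2 hN.2)] at hright
  rw [hbulk, ← mul_sub, ← mul_sub, mul_div_mul_left _ _ hα.ne', mul_div_mul_left _ _ hα.ne'] at h
  linarith

theorem integral_cexp_mul_log_sub_pi_div_four (α T ν : ℝ) :
    (∫ t in (α * T)..(2 * α * T),
        cexp (I * ((t * Real.log (t / (2 * π * Real.exp 1 * ν * α)) : ℝ) - (π / 4 : ℝ)))) =
      cexp (I * (-(π / 4) : ℝ)) * ∫ t in (α * T)..(α * (2 * T)),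
        cexp (I * (t * Real.log (t / (Real.exp 1 * (α * (2 * π * ν)))) : ℝ)) := by
  rw [← intervalIntegral.integral_const_mul, show 2 * α * T = α * (2 * T) by ring,
    show 2 * π * Real.exp 1 * ν * α = Real.exp 1 * (α * (2 * π * ν)) by ring]
  refine intervalIntegral.integral_congr fun t _ ↦ ?_
  simp only [← Complex.exp_add, ← mul_add, ofReal_neg, sub_eq_neg_add]

theorem two_mul_pi_mul_sqrt_mul_cexp (x : ℝ) :
    (2 * π * √x : ℝ) * cexp (-(2 * π * I * x)) =
      cexp (I * (-(π / 4) : ℝ)) * (√(2 * π * (2 * π * x)) * cexp (I * (π / 4 : ℝ)) *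
        cexp (-(I * (2 * π * x : ℝ)))) := by
  have hsqrt : √(2 * π * (2 * π * x)) = 2 * π * √x := by
    rw [← mul_assoc, ← pow_two, Real.sqrt_mul (sq_nonneg _), Real.sqrt_sq Real.two_pi_pos.le]
  have hphase : cexp (I * (-(π / 4) : ℝ)) * cexp (I * (π / 4 : ℝ)) = 1 := by
    rw [← Complex.exp_add, ← mul_add, ← ofReal_add, neg_add_cancel, ofReal_zero, mul_zero,
      Complex.exp_zero]
  have hexp : -(2 * π * I * x) = -(I * (2 * π * x : ℝ)) := by
    push_cast
    ring
  rw [hsqrt, hexp]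
  linear_combination -((2 * π * √x : ℝ) * cexp (-(I * (2 * π * x : ℝ)))) * hphase

theorem stationary_phase_eval_general (α : ℝ) (hα : 0 < α) :
    ∃ C : ℝ, ∀ T ν : ℝ, 0 < ν → T ≤ 2 * π * ν → 2 * π * ν ≤ 2 * T →
      ‖(∫ t in (α * T)..(2 * α * T),
            cexp (I * ((t * Real.log (t / (2 * π * Real.exp 1 * ν * α)) : ℝ) - (π / 4 : ℝ)))) -
          (2 * π * √(ν * α) : ℝ) * cexp (-(2 * π * I * ν * α))‖ ≤
        C * (T ^ ((2 : ℝ) / 5) +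
          (if T = 2 * π * ν then √T else min √T (1 / |Real.log (T / (2 * π * ν))|)) +
          (if T = π * ν then √T else min √T (1 / |Real.log (T / (π * ν))|))) := by
  refine ⟨2 * (1 / α ^ 2 + 8 * α) + 3 * (√(2 * α) + 2), fun T ν hν hl hu ↦ ?_⟩
  have hT : 0 < T := by linarith [mul_pos Real.two_pi_pos hν]
  have h := norm_integral_dyadic_cexp_mul_log_sub_le hα hT ⟨hl, hu⟩
  have hcap : ∀ x, 0 ≤ cappedInv √T |x| := fun x ↦
    cappedInv_nonneg (Real.sqrt_nonneg _) (abs_nonneg _)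
  have hmain := two_mul_pi_mul_sqrt_mul_cexp (ν * α)
  rw [show 2 * π * (ν * α) = α * (2 * π * ν) by ring, ofReal_mul ν, ← mul_assoc _ (ν : ℂ)] at hmain
  rw [show 2 * T / (2 * π * ν) = T / (π * ν) by rw [mul_assoc, mul_div_mul_left _ _ two_ne_zero]]
    at h
  rw [← cappedInv_abs_log_div hT (by positivity), ← cappedInv_abs_log_div hT (by positivity),
    integral_cexp_mul_log_sub_pi_div_four, hmain, ← mul_sub, norm_mul, norm_exp_I_mul_ofReal,
    one_mul, add_assoc]
  refine h.trans ?_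
  rw [mul_add (2 * _ + _)]
  gcongr
  · exact le_add_of_nonneg_right (by positivity)
  · exact add_nonneg (hcap _) (hcap _)
  · exact le_add_of_nonneg_left (by positivity)

/-- Stationary-phase evaluation (Titchmarsh, Lemma 4.6) of
`∫_{αT}^{2αT} e^{i(t log(t/(2πenα)) − π/4)} dt` for `T ≤ 2πn ≤ 2T`: the main term is
`2π √(nα) e^{−2πinα}`, with the stated error terms (where, by convention, the term
`min(√T, 1/|log(T/(2πn))|)` is read as `√T` when `2πn = T`, and similarly for
`min(√T, 1/|log(T/(πn))|)` when `πn = T`). -/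
theorem stationary_phase_eval (α : ℝ) (hα : 0 < α) :
    ∃ C : ℝ, ∀ (T : ℝ), 1 ≤ T → ∀ n : ℕ, 0 < n →
      T ≤ 2 * π * n → 2 * π * n ≤ 2 * T →
      ‖(∫ t in (α * T)..(2 * α * T),
            Complex.exp (Complex.I *
              ((t * Real.log (t / (2 * π * Real.exp 1 * n * α)) : ℝ) - (π / 4 : ℝ)))) -
          (2 * π * Real.sqrt (n * α) : ℝ) *
            Complex.exp (-(2 * π * Complex.I * n * α))‖ ≤
        C * (T ^ ((2 : ℝ) / 5) +
          (if T = 2 * π * n then Real.sqrt T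
            else min (Real.sqrt T) (1 / |Real.log (T / (2 * π * n))|)) +
          (if T = π * n then Real.sqrt T
            else min (Real.sqrt T) (1 / |Real.log (T / (π * n))|))) := by
  obtain ⟨C, hC⟩ := stationary_phase_eval_general α hα
  exact ⟨C, fun T _ n hn hl hu ↦ mod_cast hC T n (Nat.cast_pos.2 hn) hl hu⟩
end

section
/- Let q be a positive integer and let g : ℕ → ℂ be a function with g(1) = 1 that is multiplicative (g(mn) = g(m) g(n) whenever m and n are coprime positive integers) and periodic modulo q (g(n + q) = g(n) for all positive integers n). Then there exists a Dirichlet character χ modulo q such that g(n) = χ(n) for every positive integer n coprime to q. -/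
/-!
For `a` coprime to `q`, Euler's theorem gives `b * a ^ φ(q) + q ≡ b` mod `q`, and the left-hand side
is coprime to `a`. Replacing `b` by it, periodicity turns multiplicativity on coprime pairs into
`g (a * b) = g a * g b` for every `a` coprime to `q`, so `g` descends to a homomorphism on the units
of `ZMod q`.
-/

section PeriodicOnPositives

variable {α : Type*} {q : ℕ} {g : ℕ → α}

theorem eq_of_modEq_of_periodic (hper : ∀ n : ℕ, 0 < n → g (n + q) = g n) {a b : ℕ}
    (ha : 0 < a) (hb : 0 < b) (hab : a ≡ b [MOD q]) : g a = g b := by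
  have shifted_periodic : Function.Periodic (fun n ↦ g (n + 1)) q := fun n ↦ by
    simpa only [Nat.add_right_comm] using hper (n + 1) n.succ_pos
  obtain ⟨a, rfl⟩ := Nat.exists_eq_add_one.mpr ha
  obtain ⟨b, rfl⟩ := Nat.exists_eq_add_one.mpr hb
  have mod_eq : a % q = b % q := hab.add_right_cancel' 1
  rw [← shifted_periodic.map_mod_nat a, mod_eq, shifted_periodic.map_mod_nat b]

theorem eq_of_natCast_eq_of_periodic (hper : ∀ n : ℕ, 0 < n → g (n + q) = g n) {a b : ℕ}
    (ha : 0 < a) (hb : 0 < b) (hab : (a : ZMod q) = b) : g a = g b :=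
  eq_of_modEq_of_periodic hper ha hb ((ZMod.natCast_eq_natCast_iff a b q).mp hab)

end PeriodicOnPositives

theorem exists_pos_modEq_coprime {q : ℕ} [NeZero q] {a : ℕ} (haq : a.Coprime q) (b : ℕ) :
    ∃ c, 0 < c ∧ c ≡ b [MOD q] ∧ a.Coprime c := by
  refine ⟨b * a ^ q.totient + q, Nat.add_pos_right _ (NeZero.pos q), ?_, ?_⟩
  · calc b * a ^ q.totient + q
        ≡ b * a ^ q.totient [MOD q] := Nat.add_mod_right _ _
      _ ≡ b * 1 [MOD q] := (Nat.ModEq.pow_totient haq).mul_left b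
      _ = b := mul_one b
  · have dvd_summand : a ∣ b * a ^ q.totient :=
      (dvd_pow_self a (Nat.totient_pos.mpr (NeZero.pos q)).ne').mul_left b
    exact (Nat.coprime_add_iff_right dvd_summand).mpr haq

theorem map_mul_of_coprime_modulus {M : Type*} [Mul M] {q : ℕ} [NeZero q] {g : ℕ → M}
    (hmul : ∀ m n : ℕ, 0 < m → 0 < n → Nat.Coprime m n → g (m * n) = g m * g n)
    (hper : ∀ n : ℕ, 0 < n → g (n + q) = g n) {a b : ℕ} (ha : 0 < a) (hb : 0 < b)
    (haq : a.Coprime q) : g (a * b) = g a * g b := by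
  obtain ⟨c, hc, hcb, hac⟩ := exists_pos_modEq_coprime haq b
  calc g (a * b)
      = g (a * c) :=
        eq_of_modEq_of_periodic hper (Nat.mul_pos ha hb) (Nat.mul_pos ha hc) (hcb.symm.mul_left a)
    _ = g a * g c := hmul a c ha hc hac
    _ = g a * g b := by rw [eq_of_modEq_of_periodic hper hc hb hcb]

section UnitsHom

variable {M : Type*} [Monoid M] {q : ℕ} [NeZero q] {g : ℕ → M} (hg1 : g 1 = 1)
  (hmul : ∀ m n : ℕ, 0 < m → 0 < n → Nat.Coprime m n → g (m * n) = g m * g n)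
  (hper : ∀ n : ℕ, 0 < n → g (n + q) = g n)

/-- The homomorphism on the units of `ZMod q` induced by a `q`-periodic multiplicative function,
from which its Dirichlet character is built. The representative `val u` is shifted by `q` because
it is `0` when `q = 1`, where `g` is unconstrained. -/
def unitsHomOfPeriodic : (ZMod q)ˣ →* M where
  toFun u := g ((u : ZMod q).val + q)
  map_one' := by
    rw [← hg1]
    exact eq_of_natCast_eq_of_periodic hper (Nat.add_pos_right _ (NeZero.pos q)) one_pos (by simp)
  map_mul' u v := by
    have rep_pos (w : (ZMod q)ˣ) : 0 < (w : ZMod q).val + q :=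
      Nat.add_pos_right _ (NeZero.pos q)
    have rep_coprime : ((u : ZMod q).val + q).Coprime q :=
      Nat.coprime_add_self_left.mpr (ZMod.val_coe_unit_coprime u)
    rw [← map_mul_of_coprime_modulus hmul hper (rep_pos u) (rep_pos v) rep_coprime]
    exact eq_of_natCast_eq_of_periodic hper (rep_pos (u * v))
      (Nat.mul_pos (rep_pos u) (rep_pos v)) (by simp)

theorem unitsHomOfPeriodic_unitOfCoprime {n : ℕ} (hn : 0 < n) (hnq : n.Coprime q) :
    unitsHomOfPeriodic hg1 hmul hper (ZMod.unitOfCoprime n hnq) = g n :=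
  eq_of_natCast_eq_of_periodic hper (Nat.add_pos_right _ (NeZero.pos q)) hn (by simp)

end UnitsHom

theorem periodic_multiplicative_eq_dirichlet_character_general {R : Type*} [CommMonoidWithZero R]
    {q : ℕ} [NeZero q] {g : ℕ → R} (hg1 : g 1 = 1)
    (hmul : ∀ m n : ℕ, 0 < m → 0 < n → Nat.Coprime m n → g (m * n) = g m * g n)
    (hper : ∀ n : ℕ, 0 < n → g (n + q) = g n) :
    ∃ χ : DirichletCharacter R q, ∀ n : ℕ, 0 < n → Nat.Coprime n q → g n = χ n := by
  refine ⟨MulChar.ofUnitHom (unitsHomOfPeriodic hg1 hmul hper).toHomUnits, fun n hn hnq ↦ ?_⟩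
  rw [← ZMod.coe_unitOfCoprime n hnq, MulChar.ofUnitHom_coe, MonoidHom.coe_toHomUnits,
    unitsHomOfPeriodic_unitOfCoprime hg1 hmul hper hn hnq]

/-- A multiplicative function `g : ℕ → ℂ` with `g 1 = 1` that is
periodic modulo a positive integer `q` agrees with some Dirichlet character `χ` mod `q`
on all positive integers coprime to `q`. -/
theorem periodic_multiplicative_eq_dirichlet_character (q : ℕ) (hq : 0 < q)
    (g : ℕ → ℂ) (hg1 : g 1 = 1)
    (hmul : ∀ m n : ℕ, 0 < m → 0 < n → Nat.Coprime m n → g (m * n) = g m * g n)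
    (hper : ∀ n : ℕ, 0 < n → g (n + q) = g n) :
    ∃ χ : DirichletCharacter ℂ q, ∀ n : ℕ, 0 < n → Nat.Coprime n q → g n = χ n := by
  have : NeZero q := ⟨hq.ne'⟩
  exact periodic_multiplicative_eq_dirichlet_character_general hg1 hmul hper
end
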